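/- arXiv:1408.2243 — 12 statements merged into one kernel-verified Lean document; each statement's English description precedes it below -/
import Mathlib

section
/- For every x in the open interval (0, π/2), the function p ↦ (1/(3p²))·cos(px) + 1 − 1/(3p²) (with value 1 − x²/6 at p = 0) is increasing in p on the interval [0, 1]. In particular, for any 0 ≤ p < q ≤ 1 and any x ∈ (0, π/2), one has (1/(3p²))·cos(px) + 1 − 1/(3p²) < (1/(3q²))·cos(qx) + 1 − 1/(3q²) (interpreting the p = 0 case as 1 − x²/6). -/
open Real

/-- For each fixed `x ∈ (0, π/2)`, the function
`p ↦ (1/(3p²))·cos(px) + 1 − 1/(3p²)` (with value `1 − x²/6` at `p = 0`)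
is (strictly) increasing on `[0, 1]`. -/
theorem stmt_0 (x : ℝ) (hx : x ∈ Set.Ioo 0 (π / 2)) :
    StrictMonoOn
      (fun p : ℝ =>
        if p = 0 then 1 - x ^ 2 / 6
        else 1 / (3 * p ^ 2) * Real.cos (p * x) + 1 - 1 / (3 * p ^ 2))
      (Set.Icc (0 : ℝ) 1) := by
  obtain ⟨hx0, hx1⟩ := hx
  have hpi := Real.pi_pos
  intro p hp q hq hpq
  obtain ⟨hp0, hp1⟩ := hp
  obtain ⟨hq0, hq1⟩ := hq
  have hqp : 0 < q := lt_of_le_of_lt hp0 hpq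
  have hqx : q * x ≤ x := by nlinarith
  dsimp only
  rw [if_neg hqp.ne']
  rcases hp0.eq_or_lt with h | h
  · rw [if_pos h.symm]
    have h1 := Real.one_sub_sq_div_two_lt_cos (x := q * x) (by positivity)
    have e : 1 / (3 * q ^ 2) * Real.cos (q * x) + 1 - 1 / (3 * q ^ 2) - (1 - x ^ 2 / 6)
        = 1 / (3 * q ^ 2) * (Real.cos (q * x) - (1 - (q * x) ^ 2 / 2)) := by
      field_simp
      ring
    have : 0 < 1 / (3 * q ^ 2) * (Real.cos (q * x) - (1 - (q * x) ^ 2 / 2)) :=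
      mul_pos (by positivity) (by linarith)
    linarith
  · rw [if_neg h.ne']
    have hb : 0 < q * x / 2 := by positivity
    have hsb : 0 < Real.sin (q * x / 2) := Real.sin_pos_of_pos_of_lt_pi hb (by linarith)
    have hc := strictConcaveOn_sin_Icc.2 (show (0:ℝ) ∈ Set.Icc 0 π from ⟨le_rfl, hpi.le⟩)
      (show q * x / 2 ∈ Set.Icc 0 π from ⟨hb.le, by linarith⟩) hb.ne
      (show 0 < 1 - p / q by rw [sub_pos, div_lt_one hqp]; exact hpq)
      (show 0 < p / q by positivity) (by ring)
    simp only [smul_eq_mul, Real.sin_zero, mul_zero, zero_add] at hc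
    have e1 : p / q * (q * x / 2) = p * x / 2 := by field_simp
    rw [e1] at hc
    have hd : Real.sin (q * x / 2) / q < Real.sin (p * x / 2) / p := by
      rw [lt_div_iff₀ h]
      calc _ = p / q * Real.sin (q * x / 2) := by ring
        _ < _ := hc
    have hsq := pow_lt_pow_left₀ hd (by positivity) two_ne_zero
    have key : ∀ r : ℝ, 0 < r → 1 / (3 * r ^ 2) * Real.cos (r * x) + 1 - 1 / (3 * r ^ 2)
        = 1 - 2 / 3 * (Real.sin (r * x / 2) / r) ^ 2 := by
      intro r hr
      have : Real.cos (r * x) = 1 - 2 * Real.sin (r * x / 2) ^ 2 := by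
        have h2 := Real.cos_two_mul (r * x / 2)
        have h3 := Real.sin_sq_add_cos_sq (r * x / 2)
        rw [show 2 * (r * x / 2) = r * x by ring] at h2
        linarith
      rw [this]
      field_simp
      ring
    rw [key p h, key q hqp]
    linarith
end

section
/- Let c ∈ (0, 3/5] and for each natural number n ≥ 1 define a_n(c) = 3 − (2n+1)·c^(n−1). Then for every n ≥ 3 one has 1 < a_{n+1}(c)/a_n(c) ≤ a_{n+1}(3/5)/a_n(3/5) ≤ 11/5. -/
theorem aux_bern (c d : ℝ) (hc : 0 < c) (hd : c ≤ d) (k : ℕ) :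
    c ^ (k+1) + ((k:ℝ)+1) * c ^ k * (d - c) ≤ d ^ (k+1) := by
  induction k with
  | zero => simp
  | succ k ih =>
    have h1 := mul_le_mul_of_nonneg_right ih (hc.le.trans hd)
    have h2 : 0 ≤ ((k:ℝ)+1) * c ^ k * (d - c) * (d - c) := by
      have : 0 ≤ d - c := by linarith
      positivity
    rw [pow_succ d (k+1)]
    push_cast
    refine le_trans ?_ h1
    rw [pow_succ c (k+1), pow_succ c k]
    nlinarith [h2]

theorem aux_T (k : ℕ) : ((3:ℝ)/5) ^ (k+2) * (16 * (k:ℝ) + 50) ≤ 18 := by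
  induction k with
  | zero => norm_num
  | succ k ih =>
    have : (0:ℝ) < (3/5) ^ (k+2) := by positivity
    have hk : (0:ℝ) ≤ k := Nat.cast_nonneg k
    rw [show k+1+2 = (k+2)+1 from rfl, pow_succ]
    push_cast
    nlinarith [mul_nonneg this.le hk]

/-- For `c ∈ (0, 3/5]`, `a_n(c) = 3 − (2n+1)·c^(n−1)` and `n ≥ 3`, one has
`1 < a_{n+1}(c)/a_n(c) ≤ a_{n+1}(3/5)/a_n(3/5) ≤ 11/5`. -/
theorem stmt_3 (c : ℝ) (hc : c ∈ Set.Ioc (0 : ℝ) (3 / 5)) (n : ℕ) (hn : 3 ≤ n)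
    (a : ℕ → ℝ → ℝ) (ha : ∀ m x, a m x = 3 - (2 * (m : ℝ) + 1) * x ^ (m - 1)) :
    1 < a (n + 1) c / a n c ∧
      a (n + 1) c / a n c ≤ a (n + 1) (3 / 5) / a n (3 / 5) ∧
        a (n + 1) (3 / 5) / a n (3 / 5) ≤ 11 / 5 := by
  obtain ⟨h0, h1⟩ := hc
  obtain ⟨k, rfl⟩ := Nat.exists_eq_add_of_le' hn
  have e1 : ∀ x, a (k+3) x = 3 - (2 * (k:ℝ) + 7) * x ^ (k+2) := by
    intro x
    rw [ha, show k + 3 - 1 = k + 2 from rfl]; push_cast; ring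
  have e2 : ∀ x, a (k+3+1) x = 3 - (2 * (k:ℝ) + 9) * (x ^ (k+2) * x) := by
    intro x
    rw [ha, show k + 3 + 1 - 1 = k + 2 + 1 from rfl, pow_succ]; push_cast; ring
  have hk : (0:ℝ) ≤ k := Nat.cast_nonneg k
  have hT := aux_T k
  have hB := aux_bern c (3/5) h0 h1 (k+1)
  have htT : c ^ (k+2) ≤ (3/5 : ℝ) ^ (k+2) := pow_le_pow_left₀ h0.le h1 _
  have ht0 : 0 < c ^ (k+2) := by positivity
  have hs0 : 0 < c ^ (k+1) := by positivity
  have hts : c ^ (k+2) = c ^ (k+1) * c := pow_succ _ _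
  have key : 0 ≤ 3 * (2*(k:ℝ)+7) * ((3/5)^(k+2) - c^(k+2))
      - 3 * (2*(k:ℝ)+9) * ((3/5)^(k+2) * (3/5) - c^(k+2) * c)
      + (2*(k:ℝ)+7) * (2*(k:ℝ)+9) * (c^(k+2) * (3/5)^(k+2)) * (3/5 - c) := by
    rcases Nat.eq_zero_or_pos k with rfl | hk1
    · norm_num
      have : 0 ≤ (3/5 - c) * (2.88 + 4.8 * c - 4.32 * c^2) := by
        apply mul_nonneg <;> nlinarith
      nlinarith [this]
    · have hk1' : (1:ℝ) ≤ k := by exact_mod_cast hk1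
      have hT0 : (0:ℝ) < (3/5)^(k+2) := by positivity
      have hdc : 0 ≤ 3/5 - c := by linarith
      have h3 : 0 ≤ (2*(k:ℝ)+7) * (2*(k:ℝ)+9) * (c^(k+2) * (3/5)^(k+2)) * (3/5 - c) := by
        positivity
      have hB' : ((k:ℝ)+2) * c^(k+1) * (3/5 - c) ≤ (3/5)^(k+2) - c^(k+2) := by
        push_cast at hB
        have : (k:ℝ) + 1 + 1 = k + 2 := by ring
        rw [this] at hB
        linarith
      have hcoef : 0 ≤ (2*(k:ℝ)+7) - (2*(k:ℝ)+9) * (3/5) := by linarith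
      have h4 := mul_le_mul_of_nonneg_left hB' hcoef
      have h5 : 0 ≤ ((2*(k:ℝ)+7) - (2*(k:ℝ)+9) * (3/5)) * (k+2) - (2*(k:ℝ)+9) * c := by
        nlinarith
      have h6 := mul_nonneg h5 (mul_nonneg hs0.le hdc)
      have h7 : (2*(k:ℝ)+9) * (c^(k+2) * (3/5 - c)) ≤
          ((2*(k:ℝ)+7) - (2*(k:ℝ)+9) * (3/5)) * ((3/5)^(k+2) - c^(k+2)) := by
        refine le_trans ?_ h4
        rw [hts]
        linarith
      linarith
  rw [e1, e1, e2, e2]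
  clear hB hs0 hts
  generalize ((3:ℝ)/5)^(k+2) = T at *
  generalize c^(k+2) = t at *
  have hAT : 0 < 3 - (2*(k:ℝ)+7) * T := by nlinarith
  have hAt : 0 < 3 - (2*(k:ℝ)+7) * t := by nlinarith
  refine ⟨?_, ?_, ?_⟩
  · rw [lt_div_iff₀ hAt]
    have : 0 < (2*(k:ℝ)+7) - (2*(k:ℝ)+9) * c := by nlinarith
    nlinarith [mul_pos ht0 this]
  · rw [div_le_div_iff₀ hAt hAT]
    linarith
  · rw [div_le_iff₀ hAT]
    linarith
end

section
/- If p ∈ (0, 1] is such that sin(x)/x < (1/(3p²))·cos(px) + 1 − 1/(3p²) for all x ∈ (0, π/2), then p ≥ √15/5. -/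
open Real

theorem aux_mono (f f' : ℝ → ℝ) (hf : ∀ x, HasDerivAt f (f' x) x) (h0 : f 0 = 0)
    (hn : ∀ x, 0 ≤ x → 0 ≤ f' x) (x : ℝ) (hx : 0 ≤ x) : 0 ≤ f x := by
  have hm : MonotoneOn f (Set.Ici 0) := by
    apply monotoneOn_of_deriv_nonneg (convex_Ici 0)
    · exact fun y _ => (hf y).continuousAt.continuousWithinAt
    · exact fun y _ => (hf y).differentiableAt.differentiableWithinAt
    · intro y hy
      rw [interior_Ici] at hy
      rw [(hf y).deriv]
      exact hn y (le_of_lt hy)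
  have := hm (Set.mem_Ici.2 le_rfl) (Set.mem_Ici.2 hx) hx
  linarith

theorem aux_s3 (x : ℝ) (hx : 0 ≤ x) : 0 ≤ sin x - (x - x^3/6) := by
  refine aux_mono (fun x => sin x - (x - x^3/6)) (fun x => cos x - (1 - x^2/2)) ?_ (by simp) ?_ x hx
  · intro x
    refine ((hasDerivAt_sin x).sub ((hasDerivAt_id x).sub ((hasDerivAt_pow 3 x).div_const 6))).congr_deriv ?_
    norm_num; ring
  · intro x _
    have := one_sub_sq_div_two_le_cos (x := x)
    linarith

theorem aux_c4 (x : ℝ) (hx : 0 ≤ x) : 0 ≤ (1 - x^2/2 + x^4/24) - cos x := by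
  refine aux_mono (fun x => (1 - x^2/2 + x^4/24) - cos x) (fun x => sin x - (x - x^3/6)) ?_ (by simp) aux_s3 x hx
  intro x
  refine (((((hasDerivAt_pow 2 x).div_const 2).const_sub 1).add ((hasDerivAt_pow 4 x).div_const 24)).sub (hasDerivAt_cos x)).congr_deriv ?_
  norm_num; ring

theorem aux_s5 (x : ℝ) (hx : 0 ≤ x) : 0 ≤ (x - x^3/6 + x^5/120) - sin x := by
  refine aux_mono (fun x => (x - x^3/6 + x^5/120) - sin x) (fun x => (1 - x^2/2 + x^4/24) - cos x) ?_ (by simp) aux_c4 x hx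
  intro x
  refine ((((hasDerivAt_id x).sub ((hasDerivAt_pow 3 x).div_const 6)).add ((hasDerivAt_pow 5 x).div_const 120)).sub (hasDerivAt_sin x)).congr_deriv ?_
  norm_num; ring

theorem aux_c6 (x : ℝ) (hx : 0 ≤ x) : 0 ≤ cos x - (1 - x^2/2 + x^4/24 - x^6/720) := by
  refine aux_mono (fun x => cos x - (1 - x^2/2 + x^4/24 - x^6/720)) (fun x => (x - x^3/6 + x^5/120) - sin x) ?_ (by simp) aux_s5 x hx
  intro x
  refine ((hasDerivAt_cos x).sub (((((hasDerivAt_pow 2 x).div_const 2).const_sub 1).add ((hasDerivAt_pow 4 x).div_const 24)).sub ((hasDerivAt_pow 6 x).div_const 720))).congr_deriv ?_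
  norm_num; ring

theorem aux_s7 (x : ℝ) (hx : 0 ≤ x) : 0 ≤ sin x - (x - x^3/6 + x^5/120 - x^7/5040) := by
  refine aux_mono (fun x => sin x - (x - x^3/6 + x^5/120 - x^7/5040)) (fun x => cos x - (1 - x^2/2 + x^4/24 - x^6/720)) ?_ (by simp) aux_c6 x hx
  intro x
  refine ((hasDerivAt_sin x).sub ((((hasDerivAt_id x).sub ((hasDerivAt_pow 3 x).div_const 6)).add ((hasDerivAt_pow 5 x).div_const 120)).sub ((hasDerivAt_pow 7 x).div_const 5040))).congr_deriv ?_
  norm_num; ring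

/-- If `p ∈ (0, 1]` satisfies `sin x / x < (1/(3p²))·cos(px) + 1 − 1/(3p²)`
for all `x ∈ (0, π/2)`, then `p ≥ √15/5`. -/
theorem stmt_4 (p : ℝ) (hp : p ∈ Set.Ioc (0 : ℝ) 1)
    (h : ∀ x ∈ Set.Ioo (0 : ℝ) (π / 2),
      Real.sin x / x < 1 / (3 * p ^ 2) * Real.cos (p * x) + 1 - 1 / (3 * p ^ 2)) :
    Real.sqrt 15 / 5 ≤ p := by
  obtain ⟨hp0, hp1⟩ := hp
  suffices hk : 3/5 ≤ p^2 by
    have : Real.sqrt 15 ≤ 5 * p := by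
      apply Real.sqrt_le_iff.2
      constructor
      · positivity
      · nlinarith
    linarith
  by_contra hlt
  push Not at hlt
  obtain ⟨x, hxd⟩ : ∃ x, x = 3/5 - p^2 := ⟨_, rfl⟩
  have hx0 : 0 < x := by linarith
  have hx1 : x < 1 := by nlinarith
  have hpi := Real.pi_gt_three
  have hh := h x ⟨hx0, by linarith⟩
  have h1 : 1 - x^2/6 + x^4/120 - x^6/5040 ≤ sin x / x := by
    rw [le_div_iff₀ hx0]
    have := aux_s7 x hx0.le
    linarith
  have h2 : 1 / (3 * p ^ 2) * Real.cos (p * x) ≤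
      1 / (3 * p ^ 2) * (1 - (p*x)^2/2 + (p*x)^4/24) := by
    apply mul_le_mul_of_nonneg_left _ (by positivity)
    have := aux_c4 (p*x) (by positivity)
    linarith
  have h3 : 1 / (3 * p ^ 2) * (1 - (p*x)^2/2 + (p*x)^4/24)
      = 1 / (3 * p ^ 2) - x^2/6 + p^2*x^4/72 := by
    field_simp
    ring
  have h4 : 0 < x^4 * (p^2/72 - 1/120 + x^2/5040) := by nlinarith
  have h5 := (mul_pos_iff_of_pos_left (by positivity)).1 h4
  nlinarith
end

section
/- There exists a unique p₀ ∈ (1/2, 1) such that 2/π − ((1/(3p₀²))·cos(p₀π/2) + 1 − 1/(3p₀²)) = 0; moreover for p ∈ (0, p₀) the quantity 2/π − ((1/(3p²))·cos(pπ/2) + 1 − 1/(3p²)) is positive and for p ∈ (p₀, 1) it is negative. -/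
open Real

lemma aux_anti {p q : ℝ} (hp : 0 < p) (hpq : p < q) (hq : q ≤ 1) :
    2 / π - (1 / (3 * q ^ 2) * Real.cos (q * π / 2) + 1 - 1 / (3 * q ^ 2)) <
    2 / π - (1 / (3 * p ^ 2) * Real.cos (p * π / 2) + 1 - 1 / (3 * p ^ 2)) := by
  have hq0 : 0 < q := hp.trans hpq
  have key : ∀ x : ℝ, 0 < x →
      2 / π - (1 / (3 * x ^ 2) * Real.cos (x * π / 2) + 1 - 1 / (3 * x ^ 2)) =
      2 / π - 1 + 2 / 3 * (Real.sin (x * π / 4) / x) ^ 2 := by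
    intro x hx
    have h : Real.cos (x * π / 2) = 1 - 2 * Real.sin (x * π / 4) ^ 2 := by
      rw [show x * π / 2 = 2 * (x * π / 4) by ring, Real.cos_two_mul, Real.cos_sq']
      ring
    rw [h]
    have := Real.pi_pos
    field_simp
    ring
  rw [key q hq0, key p hp]
  have hpi := Real.pi_pos
  have hsq : 0 < Real.sin (q * π / 4) :=
    Real.sin_pos_of_pos_of_lt_pi (by positivity) (by nlinarith)
  have hc := strictConcaveOn_sin_Icc.2
    (show (0 : ℝ) ∈ Set.Icc 0 π from ⟨le_rfl, hpi.le⟩)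
    (show q * π / 4 ∈ Set.Icc 0 π from ⟨by positivity, by nlinarith⟩)
    (by positivity)
    (show 0 < 1 - p / q from sub_pos.2 ((div_lt_one hq0).2 hpq))
    (show 0 < p / q by positivity) (by ring)
  simp only [smul_eq_mul, Real.sin_zero, mul_zero, zero_add] at hc
  rw [show p / q * (q * π / 4) = p * π / 4 by field_simp] at hc
  have h2 : Real.sin (q * π / 4) / q < Real.sin (p * π / 4) / p := by
    rw [lt_div_iff₀ hp]
    calc _ = p / q * Real.sin (q * π / 4) := by ring
      _ < _ := hc
  have h3 : 0 < Real.sin (q * π / 4) / q := by positivity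
  nlinarith

/-- There is a unique `p₀ ∈ (1/2, 1)` with
`2/π − ((1/(3p₀²))·cos(p₀π/2) + 1 − 1/(3p₀²)) = 0`; moreover this quantity is
positive for `p ∈ (0, p₀)` and negative for `p ∈ (p₀, 1)`. -/
theorem stmt_6 :
    ∃ p₀ ∈ Set.Ioo (1 / 2 : ℝ) 1,
      (2 / π - (1 / (3 * p₀ ^ 2) * Real.cos (p₀ * π / 2) + 1 - 1 / (3 * p₀ ^ 2)) = 0) ∧
      (∀ p ∈ Set.Ioo (1 / 2 : ℝ) 1,
        2 / π - (1 / (3 * p ^ 2) * Real.cos (p * π / 2) + 1 - 1 / (3 * p ^ 2)) = 0 → p = p₀) ∧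
      (∀ p ∈ Set.Ioo (0 : ℝ) p₀,
        0 < 2 / π - (1 / (3 * p ^ 2) * Real.cos (p * π / 2) + 1 - 1 / (3 * p ^ 2))) ∧
      (∀ p ∈ Set.Ioo p₀ (1 : ℝ),
        2 / π - (1 / (3 * p ^ 2) * Real.cos (p * π / 2) + 1 - 1 / (3 * p ^ 2)) < 0) := by
  have hpi := Real.pi_pos
  have hcont : ContinuousOn (fun p : ℝ =>
      2 / π - (1 / (3 * p ^ 2) * Real.cos (p * π / 2) + 1 - 1 / (3 * p ^ 2)))
      (Set.Icc (1 / 2) 1) := by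
    have hi : ContinuousOn (fun p : ℝ => 1 / (3 * p ^ 2)) (Set.Icc (1 / 2) 1) := by
      apply ContinuousOn.div (by fun_prop) (by fun_prop)
      intro x hx
      have : 0 < x := by linarith [hx.1]
      positivity
    have hcos : ContinuousOn (fun p : ℝ => Real.cos (p * π / 2)) (Set.Icc (1 / 2) 1) := by
      fun_prop
    exact continuousOn_const.sub (((hi.mul hcos).add continuousOn_const).sub hi)
  have h1 : 2 / π - (1 / (3 * (1 : ℝ) ^ 2) * Real.cos (1 * π / 2) + 1 - 1 / (3 * (1 : ℝ) ^ 2))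
      < 0 := by
    rw [one_mul, Real.cos_pi_div_two]
    have : 2 / π < 2 / 3 := by
      gcongr
      exact Real.pi_gt_three
    linarith
  have h2 : 0 < 2 / π - (1 / (3 * (1 / 2 : ℝ) ^ 2) * Real.cos (1 / 2 * π / 2) + 1
      - 1 / (3 * (1 / 2 : ℝ) ^ 2)) := by
    rw [show 1 / 2 * π / 2 = π / 4 by ring, Real.cos_pi_div_four]
    have h : (2 : ℝ) / 3.15 < 2 / π := by
      gcongr
      exact Real.pi_lt_d2
    have hs : √2 < 1.415 := by
      rw [Real.sqrt_lt' (by norm_num)]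
      norm_num
    norm_num at *
    linarith
  obtain ⟨p₀, hp, h0⟩ := intermediate_value_Ioo' (by norm_num) hcont ⟨h1, h2⟩
  have h0' : 2 / π - (1 / (3 * p₀ ^ 2) * Real.cos (p₀ * π / 2) + 1 - 1 / (3 * p₀ ^ 2)) = 0 := h0
  have hp0 : 0 < p₀ := by linarith [hp.1]
  refine ⟨p₀, hp, h0', ?_, ?_, ?_⟩
  · intro p hpp h
    have : 0 < p := by linarith [hpp.1]
    rcases lt_trichotomy p p₀ with hl | hl | hl
    · linarith [aux_anti this hl hp.2.le]
    · exact hl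
    · linarith [aux_anti hp0 hl hpp.2.le]
  · intro p hpp
    linarith [aux_anti hpp.1 hpp.2 hp.2.le]
  · intro p hpp
    linarith [aux_anti hp0 hpp.1 hpp.2.le]
end

section
/- For every q with √15/5 ≤ q ≤ 1 and every x ∈ (0, π/2), one has sin(x)/x < (1/(3q²))·cos(qx) + 1 − 1/(3q²). -/
open Real

theorem aux_mono_s7 (f g : ℝ → ℝ) (hd : ∀ x, HasDerivAt f (g x) x) (h0 : f 0 = 0)
    (hg : ∀ x, 0 ≤ x → 0 ≤ g x) : ∀ x, 0 ≤ x → 0 ≤ f x := by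
  intro x hx
  have hm : MonotoneOn f (Set.Ici 0) := by
    apply monotoneOn_of_deriv_nonneg (convex_Ici 0)
    · exact fun y _ => (hd y).continuousAt.continuousWithinAt
    · exact fun y _ => (hd y).differentiableAt.differentiableWithinAt
    · intro y hy
      rw [interior_Ici] at hy
      rw [(hd y).deriv]
      exact hg y (le_of_lt hy)
  have := hm (Set.mem_Ici.2 le_rfl) (Set.mem_Ici.2 hx) hx
  rwa [h0] at this

theorem aux_step_sin (s : ℝ) (p p' : ℝ → ℝ) (hp : ∀ x, HasDerivAt p (p' x) x) (h0 : p 0 = 0)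
    (hg : ∀ x, 0 ≤ x → 0 ≤ s * (p' x - cos x)) : ∀ x, 0 ≤ x → 0 ≤ s * (p x - sin x) :=
  aux_mono_s7 _ _ (fun x => ((hp x).sub (hasDerivAt_sin x)).const_mul s) (by simp [h0]) hg

theorem aux_step_cos (s : ℝ) (p p' : ℝ → ℝ) (hp : ∀ x, HasDerivAt p (-p' x) x) (h0 : p 0 = 1)
    (hg : ∀ x, 0 ≤ x → 0 ≤ s * (p' x - sin x)) : ∀ x, 0 ≤ x → 0 ≤ -s * (p x - cos x) :=
  aux_mono_s7 _ (fun x => s * (p' x - sin x))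
    (fun x => (((hp x).sub (hasDerivAt_cos x)).const_mul (-s)).congr_deriv (by ring))
    (by simp [h0]) hg

theorem aux_pow (n : ℕ) (c x : ℝ) : HasDerivAt (fun x : ℝ => c * x ^ n) (c * (n * x ^ (n-1))) x :=
  (hasDerivAt_pow n x).const_mul c

theorem aux_all :
    (∀ x : ℝ, 0 ≤ x → 1 - x^2/2 + x^4/24 - x^6/720 ≤ cos x) ∧
    (∀ x : ℝ, 0 ≤ x → sin x ≤ x - x^3/6 + x^5/120 - x^7/5040 + x^9/362880) := by
  have c0 : ∀ x : ℝ, 0 ≤ x → 0 ≤ (1:ℝ) * ((fun _ => (1:ℝ)) x - cos x) := by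
    intro x _; have := cos_le_one x; simp only; linarith
  have s1 := aux_step_sin 1 (fun x => x) _ (fun x => hasDerivAt_id x) rfl c0
  have c2 := aux_step_cos 1 (fun x => 1 + (-1/2) * x^2) (fun x => x)
    (fun x => ((aux_pow 2 (-1/2) x).const_add 1).congr_deriv (by norm_num; ring)) (by norm_num) s1
  have s3 := aux_step_sin (-1) (fun x => x + (-1/6) * x^3) (fun x => 1 + (-1/2) * x^2)
    (fun x => ((hasDerivAt_id x).add (aux_pow 3 (-1/6) x)).congr_deriv (by norm_num; ring))
    (by norm_num) c2
  have c4 := aux_step_cos (-1) (fun x => 1 + (-1/2) * x^2 + (1/24) * x^4)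
    (fun x => x + (-1/6) * x^3)
    (fun x => (((aux_pow 2 (-1/2) x).const_add 1).add (aux_pow 4 (1/24) x)).congr_deriv
      (by norm_num; ring)) (by norm_num) s3
  have s5 := aux_step_sin (-(-1)) (fun x => x + (-1/6) * x^3 + (1/120) * x^5)
    (fun x => 1 + (-1/2) * x^2 + (1/24) * x^4)
    (fun x => (((hasDerivAt_id x).add (aux_pow 3 (-1/6) x)).add (aux_pow 5 (1/120) x)).congr_deriv
      (by norm_num; ring)) (by norm_num) c4
  have c6 := aux_step_cos (-(-1)) (fun x => 1 + (-1/2) * x^2 + (1/24) * x^4 + (-1/720) * x^6)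
    (fun x => x + (-1/6) * x^3 + (1/120) * x^5)
    (fun x => ((((aux_pow 2 (-1/2) x).const_add 1).add (aux_pow 4 (1/24) x)).add
      (aux_pow 6 (-1/720) x)).congr_deriv (by norm_num; ring)) (by norm_num) s5
  have s7 := aux_step_sin (-(-(-1))) (fun x => x + (-1/6) * x^3 + (1/120) * x^5 + (-1/5040) * x^7)
    (fun x => 1 + (-1/2) * x^2 + (1/24) * x^4 + (-1/720) * x^6)
    (fun x => ((((hasDerivAt_id x).add (aux_pow 3 (-1/6) x)).add (aux_pow 5 (1/120) x)).add
      (aux_pow 7 (-1/5040) x)).congr_deriv (by norm_num; ring)) (by norm_num) c6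
  have c8 := aux_step_cos (-(-(-1)))
    (fun x => 1 + (-1/2) * x^2 + (1/24) * x^4 + (-1/720) * x^6 + (1/40320) * x^8)
    (fun x => x + (-1/6) * x^3 + (1/120) * x^5 + (-1/5040) * x^7)
    (fun x => (((((aux_pow 2 (-1/2) x).const_add 1).add (aux_pow 4 (1/24) x)).add
      (aux_pow 6 (-1/720) x)).add (aux_pow 8 (1/40320) x)).congr_deriv (by norm_num; ring))
    (by norm_num) s7
  have s9 := aux_step_sin (-(-(-(-1))))
    (fun x => x + (-1/6) * x^3 + (1/120) * x^5 + (-1/5040) * x^7 + (1/362880) * x^9)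
    (fun x => 1 + (-1/2) * x^2 + (1/24) * x^4 + (-1/720) * x^6 + (1/40320) * x^8)
    (fun x => (((((hasDerivAt_id x).add (aux_pow 3 (-1/6) x)).add (aux_pow 5 (1/120) x)).add
      (aux_pow 7 (-1/5040) x)).add (aux_pow 9 (1/362880) x)).congr_deriv (by norm_num; ring))
    (by norm_num) c8
  constructor
  · intro x hx; have := c6 x hx; linarith
  · intro x hx; have := s9 x hx; linarith

/-- For `√15/5 ≤ q ≤ 1` and `x ∈ (0, π/2)`,
`sin x / x < (1/(3q²))·cos(qx) + 1 − 1/(3q²)`. -/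
theorem stmt_7 (q : ℝ) (hq1 : Real.sqrt 15 / 5 ≤ q) (hq2 : q ≤ 1)
    (x : ℝ) (hx : x ∈ Set.Ioo (0 : ℝ) (π / 2)) :
    Real.sin x / x < 1 / (3 * q ^ 2) * Real.cos (q * x) + 1 - 1 / (3 * q ^ 2) := by
  obtain ⟨hx0, hx1⟩ := hx
  have h15 : 0 < Real.sqrt 15 := by positivity
  have hq0 : 0 < q := by linarith
  have hs : Real.sqrt 15 ^ 2 = 15 := Real.sq_sqrt (by norm_num)
  have ht1 : 3/5 ≤ q^2 := by nlinarith
  have ht2 : q^2 ≤ 1 := by nlinarith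
  have hxlt : x < 1.58 := by linarith [pi_lt_d2]
  have hy : x^2 < 2.5 := by nlinarith
  have hy0 : 0 < x^2 := by positivity
  have hc := aux_all.1 (q*x) (by positivity)
  have hsn := aux_all.2 x hx0.le
  have h1 : sin x / x ≤ 1 - x^2/6 + x^4/120 - x^6/5040 + x^8/362880 := by
    rw [div_le_iff₀ hx0]; linarith
  have h2 : 1 - x^2/6 + q^2 * x^4/72 - q^4*x^6/2160
      ≤ 1 / (3 * q ^ 2) * Real.cos (q * x) + 1 - 1 / (3 * q ^ 2) := by
    have := mul_le_mul_of_nonneg_left hc (show 0 ≤ 1 / (3*q^2) by positivity)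
    have e : 1 / (3*q^2) * (1 - (q*x)^2/2 + (q*x)^4/24 - (q*x)^6/720)
      = 1 / (3*q^2) - x^2/6 + q^2 * x^4/72 - q^4*x^6/2160 := by
      field_simp
      ring
    linarith
  refine lt_of_le_of_lt h1 (lt_of_lt_of_le ?_ h2)
  have h3 : 0 ≤ (q^2 - 3/5) * (1/72 - (q^2 + 3/5) * x^2 / 2160) := by
    apply mul_nonneg (by linarith)
    nlinarith
  have h4 : 0 ≤ x^4 * ((q^2 - 3/5) * (1/72 - (q^2 + 3/5) * x^2 / 2160)) := by positivity
  have h5 : 0 < x^6 * (1/5040 - 1/6000 - x^2/362880) := by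
    apply mul_pos (by positivity); linarith
  nlinarith
end

section
/- Let p₀ ∈ (0, 1) be the unique root of the equation 2/π = (1/(3p²))·cos(pπ/2) + 1 − 1/(3p²) in (0, 1). Then for every p with 0 < p ≤ p₀ and every x ∈ (0, π/2), one has (1/(3p²))·cos(px) + 1 − 1/(3p²) < sin(x)/x. -/
open Real

lemma nonneg_of_der {f f' : ℝ → ℝ} (h0 : f 0 = 0) (hd : ∀ x, HasDerivAt f (f' x) x)
    (hn : ∀ x, 0 ≤ x → 0 ≤ f' x) : ∀ x, 0 ≤ x → 0 ≤ f x := by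
  intro x hx
  have hm : MonotoneOn f (Set.Ici 0) := by
    apply monotoneOn_of_deriv_nonneg (convex_Ici 0)
    · exact fun y _ => (hd y).continuousAt.continuousWithinAt
    · exact fun y _ => (hd y).differentiableAt.differentiableWithinAt
    · intro y hy
      rw [(hd y).deriv]
      exact hn y (interior_subset hy)
  have := hm (Set.mem_Ici.2 le_rfl) (Set.mem_Ici.2 hx) hx
  linarith

lemma hp (n : ℕ) (c x : ℝ) : HasDerivAt (fun y : ℝ => y ^ n / c) ((n : ℝ) * x ^ (n - 1) / c) x :=
  (hasDerivAt_pow n x).div_const c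

lemma t1 : ∀ x : ℝ, 0 ≤ x → 0 ≤ x - sin x := fun x hx => by linarith [Real.sin_le hx]

lemma t2 : ∀ x : ℝ, 0 ≤ x → 0 ≤ cos x - (1 - x ^ 2 / 2) :=
  nonneg_of_der (by simp) (fun x => ((hasDerivAt_cos x).sub
    ((hasDerivAt_const x 1).sub (hp 2 2 x))).congr_deriv (by simp; ring)) t1

lemma t3 : ∀ x : ℝ, 0 ≤ x → 0 ≤ sin x - (x - x ^ 3 / 6) :=
  nonneg_of_der (by simp) (fun x => ((hasDerivAt_sin x).sub
    ((hasDerivAt_id x).sub (hp 3 6 x))).congr_deriv (by simp; ring)) t2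

lemma t4 : ∀ x : ℝ, 0 ≤ x → 0 ≤ (1 - x ^ 2 / 2 + x ^ 4 / 24) - cos x :=
  nonneg_of_der (by simp) (fun x => ((((hasDerivAt_const x 1).sub (hp 2 2 x)).add
    (hp 4 24 x)).sub (hasDerivAt_cos x)).congr_deriv (by simp; ring)) t3

lemma t5 : ∀ x : ℝ, 0 ≤ x → 0 ≤ (x - x ^ 3 / 6 + x ^ 5 / 120) - sin x :=
  nonneg_of_der (by simp) (fun x => ((((hasDerivAt_id x).sub (hp 3 6 x)).add
    (hp 5 120 x)).sub (hasDerivAt_sin x)).congr_deriv (by simp; ring)) t4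

lemma t6 : ∀ x : ℝ, 0 ≤ x → 0 ≤ cos x - (1 - x ^ 2 / 2 + x ^ 4 / 24 - x ^ 6 / 720) :=
  nonneg_of_der (by simp) (fun x => ((hasDerivAt_cos x).sub
    ((((hasDerivAt_const x 1).sub (hp 2 2 x)).add (hp 4 24 x)).sub (hp 6 720 x))).congr_deriv
    (by simp; ring)) t5

lemma t7 : ∀ x : ℝ, 0 ≤ x → 0 ≤ sin x - (x - x ^ 3 / 6 + x ^ 5 / 120 - x ^ 7 / 5040) :=
  nonneg_of_der (by simp) (fun x => ((hasDerivAt_sin x).sub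
    ((((hasDerivAt_id x).sub (hp 3 6 x)).add (hp 5 120 x)).sub (hp 7 5040 x))).congr_deriv
    (by simp; ring)) t6

lemma t8 : ∀ x : ℝ, 0 ≤ x →
    0 ≤ (1 - x ^ 2 / 2 + x ^ 4 / 24 - x ^ 6 / 720 + x ^ 8 / 40320) - cos x :=
  nonneg_of_der (by simp) (fun x => ((((((hasDerivAt_const x 1).sub (hp 2 2 x)).add
    (hp 4 24 x)).sub (hp 6 720 x)).add (hp 8 40320 x)).sub (hasDerivAt_cos x)).congr_deriv
    (by simp; ring)) t7

lemma t9 : ∀ x : ℝ, 0 ≤ x →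
    0 ≤ (x - x ^ 3 / 6 + x ^ 5 / 120 - x ^ 7 / 5040 + x ^ 9 / 362880) - sin x :=
  nonneg_of_der (by simp) (fun x => ((((((hasDerivAt_id x).sub (hp 3 6 x)).add
    (hp 5 120 x)).sub (hp 7 5040 x)).add (hp 9 362880 x)).sub (hasDerivAt_sin x)).congr_deriv
    (by simp; ring)) t8

lemma t10 : ∀ x : ℝ, 0 ≤ x →
    0 ≤ cos x - (1 - x ^ 2 / 2 + x ^ 4 / 24 - x ^ 6 / 720 + x ^ 8 / 40320 - x ^ 10 / 3628800) :=
  nonneg_of_der (by simp) (fun x => ((hasDerivAt_cos x).sub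
    ((((((hasDerivAt_const x 1).sub (hp 2 2 x)).add (hp 4 24 x)).sub (hp 6 720 x)).add
    (hp 8 40320 x)).sub (hp 10 3628800 x))).congr_deriv
    (by simp; ring)) t9

lemma t11 : ∀ x : ℝ, 0 ≤ x →
    0 ≤ sin x - (x - x ^ 3 / 6 + x ^ 5 / 120 - x ^ 7 / 5040 + x ^ 9 / 362880
      - x ^ 11 / 39916800) :=
  nonneg_of_der (by simp) (fun x => ((hasDerivAt_sin x).sub
    ((((((hasDerivAt_id x).sub (hp 3 6 x)).add (hp 5 120 x)).sub (hp 7 5040 x)).add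
    (hp 9 362880 x)).sub (hp 11 39916800 x))).congr_deriv
    (by simp; ring)) t10

lemma sin_slope {a b : ℝ} (ha : 0 < a) (hab : a ≤ b) (hb : b ≤ π) : a * sin b ≤ b * sin a := by
  have hb0 : 0 < b := ha.trans_le hab
  have m0 : (0 : ℝ) ∈ Set.Icc 0 π := ⟨le_rfl, pi_pos.le⟩
  have mb : b ∈ Set.Icc 0 π := ⟨hb0.le, hb⟩
  have w0 : 0 ≤ 1 - a / b := by rw [sub_nonneg, div_le_one hb0]; exact hab
  have w1 : 0 ≤ a / b := by positivity
  have h := strictConcaveOn_sin_Icc.concaveOn.2 m0 mb w0 w1 (by ring)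
  simp only [smul_eq_mul, sin_zero, mul_zero, zero_add] at h
  rw [div_mul_cancel₀ _ hb0.ne', div_mul_eq_mul_div, div_le_iff₀ hb0] at h
  linarith

lemma mono_p {p q x : ℝ} (hp : 0 < p) (hpq : p ≤ q) (hx : 0 < x) (hq : q * x / 2 ≤ π) :
    (1 - cos (q * x)) / (3 * q ^ 2) ≤ (1 - cos (p * x)) / (3 * p ^ 2) := by
  have hq0 : 0 < q := hp.trans_le hpq
  have h := sin_slope (a := p * x / 2) (b := q * x / 2) (by positivity) (by gcongr) hq
  have hs : 0 ≤ sin (q * x / 2) := sin_nonneg_of_nonneg_of_le_pi (by positivity) hq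
  have h2 : p * sin (q * x / 2) ≤ q * sin (p * x / 2) := by
    have : (x / 2) * (p * sin (q * x / 2)) ≤ (x / 2) * (q * sin (p * x / 2)) := by linarith
    exact le_of_mul_le_mul_left this (by positivity)
  have h3 := pow_le_pow_left₀ (by positivity) h2 2
  have e : ∀ r : ℝ, 1 - cos (r * x) = 2 * sin (r * x / 2) ^ 2 := by
    intro r
    have : r * x = 2 * (r * x / 2) := by ring
    rw [this, cos_two_mul, ← this]
    linarith [sin_sq_add_cos_sq (r * x / 2)]
  rw [e, e, div_le_div_iff₀ (by positivity) (by positivity)]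
  nlinarith

lemma poly {s t : ℝ} (hs : 0 < s) (hs' : s < 0.64) (ht : 0 < t) (ht' : t < 2.5) :
    -2 * (1 / 5040 - s ^ 2 / 2160) + 4 * (1 / 362880 - s ^ 3 / 120960) * t
      + (5 / 39916800 + s ^ 4 / 1088640) * t ^ 2 < 0 := by
  have h2 : s ^ 2 ≤ 0.64 ^ 2 := by gcongr
  have h3 : s ^ 3 ≤ 0.64 ^ 3 := by gcongr
  have h4 : s ^ 4 ≤ 0.64 ^ 4 := by gcongr
  have ht2 : t ^ 2 ≤ 2.5 ^ 2 := by gcongr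
  have a1 : (1 / 362880 - s ^ 3 / 120960) * t ≤ (1 / 362880 - s ^ 3 / 120960) * 2.5 := by
    apply mul_le_mul_of_nonneg_left ht'.le
    norm_num at h3 ⊢; linarith
  have a2 : (5 / 39916800 + s ^ 4 / 1088640) * t ^ 2
      ≤ (5 / 39916800 + 0.64 ^ 4 / 1088640) * 2.5 ^ 2 := by gcongr
  have a3 : s ^ 2 * (1 / 1080 - 10 * s / 120960) ≤ 0.64 ^ 2 * (1 / 1080 - 10 * 0.64 / 120960) := by
    nlinarith [mul_pos hs hs, mul_pos hs (sub_pos.2 hs')]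
  norm_num at a1 a2 a3 ⊢
  nlinarith

lemma key {q x : ℝ} (hq : 0 < q) (hq' : q < 0.8) (hx : 0 < x) (hx' : x < 1.575) :
    x * cos x - 5 * sin x + 4 * x - 4 * x * (1 - cos (q * x)) / (3 * q ^ 2)
      + x ^ 2 * sin (q * x) / (3 * q) < 0 := by
  have c1 := t8 x hx.le
  have s1 := t11 x hx.le
  have c2 := t8 (q * x) (by positivity)
  have s2 := t9 (q * x) (by positivity)
  have P := poly (s := q ^ 2) (t := x ^ 2) (by positivity) (by nlinarith) (by positivity)
    (by nlinarith)
  have b1 : x * cos x ≤ x * (1 - x ^ 2 / 2 + x ^ 4 / 24 - x ^ 6 / 720 + x ^ 8 / 40320) := by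
    gcongr; linarith
  have b2 : x ^ 2 * sin (q * x) / (3 * q) ≤ x ^ 2 * ((q * x) - (q * x) ^ 3 / 6 + (q * x) ^ 5 / 120 - (q * x) ^ 7 / 5040 + (q * x) ^ 9 / 362880) / (3 * q) := by
    gcongr; linarith
  have b3 : 4 * x * (1 - (1 - (q * x) ^ 2 / 2 + (q * x) ^ 4 / 24 - (q * x) ^ 6 / 720 + (q * x) ^ 8 / 40320)) / (3 * q ^ 2) ≤ 4 * x * (1 - cos (q * x)) / (3 * q ^ 2) := by
    gcongr; linarith
  have P2 := mul_neg_of_pos_of_neg (pow_pos hx 7) P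
  have e2 : x ^ 2 * ((q * x) - (q * x) ^ 3 / 6 + (q * x) ^ 5 / 120 - (q * x) ^ 7 / 5040 + (q * x) ^ 9 / 362880) / (3 * q) = x ^ 3 / 3 - q ^ 2 * x ^ 5 / 18 + q ^ 4 * x ^ 7 / 360 - q ^ 6 * x ^ 9 / 15120 + q ^ 8 * x ^ 11 / 1088640 := by
    field_simp; ring
  have e3 : 4 * x * (1 - (1 - (q * x) ^ 2 / 2 + (q * x) ^ 4 / 24 - (q * x) ^ 6 / 720 + (q * x) ^ 8 / 40320)) / (3 * q ^ 2) = 2 * x ^ 3 / 3 - q ^ 2 * x ^ 5 / 18 + q ^ 4 * x ^ 7 / 540 - q ^ 6 * x ^ 9 / 30240 := by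
    field_simp; ring
  rw [e2] at b2
  rw [e3] at b3
  ring_nf at *
  linarith

lemma q_lt {q : ℝ} (hq0 : 0 < q) (hq1 : q < 1)
    (hroot : (1 - cos (q * (π / 2))) / (3 * q ^ 2) = 1 - 2 / π) : q < 0.8 := by
  by_contra! h
  have hpi := pi_pos
  have h1 := mono_p (p := 0.8) (q := q) (x := π / 2) (by norm_num) h (by positivity) (by nlinarith)
  rw [hroot, le_div_iff₀ (by norm_num)] at h1
  have hlt := pi_lt_d4
  have hgt := pi_gt_d4
  have h2 : cos (0.8 * (3.1416 / 2)) ≤ cos (0.8 * (π / 2)) := by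
    apply cos_le_cos_of_nonneg_of_le_pi <;> linarith
  have h3 := t6 (0.8 * (3.1416 / 2)) (by norm_num)
  have h4 : 2 / π < 2 / 3.1415 := by gcongr
  norm_num at *
  linarith

lemma main_q {q x : ℝ} (hq0 : 0 < q) (hq1 : q < 0.8)
    (hroot : (1 - cos (q * (π / 2))) / (3 * q ^ 2) = 1 - 2 / π) (hx : 0 < x) (hx2 : x < π / 2) :
    0 < sin x - x + x * (1 - cos (q * x)) / (3 * q ^ 2) := by
  set G : ℝ → ℝ := fun x => sin x - x + x * (1 - cos (q * x)) / (3 * q ^ 2) with hG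
  have hd : ∀ y, 0 < y → HasDerivAt (fun y => G y / y ^ 5)
      ((y * cos y - 5 * sin y + 4 * y - 4 * y * (1 - cos (q * y)) / (3 * q ^ 2)
      + y ^ 2 * sin (q * y) / (3 * q)) / y ^ 6) y := by
    intro y hy
    have hc : HasDerivAt (fun y => cos (q * y)) (-sin (q * y) * q) y := by
      have := (hasDerivAt_id y).const_mul q
      simpa using this.cos
    have h1 : HasDerivAt G _ y := ((hasDerivAt_sin y).sub (hasDerivAt_id y)).add
      (((hasDerivAt_id y).mul (hc.const_sub 1)).div_const (3 * q ^ 2))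
    refine (h1.div (hasDerivAt_pow 5 y) (by positivity)).congr_deriv ?_
    simp [hG]
    field_simp
    ring
  have hanti : StrictAntiOn (fun y => G y / y ^ 5) (Set.Icc x (π / 2)) := by
    apply strictAntiOn_of_deriv_neg (convex_Icc _ _)
    · exact fun y hy => (hd y (hx.trans_le hy.1)).continuousAt.continuousWithinAt
    · intro y hy
      rw [interior_Icc] at hy
      have hy0 : 0 < y := hx.trans hy.1
      rw [(hd y hy0).deriv]
      exact div_neg_of_neg_of_pos (key hq0 hq1 hy0 (by linarith [hy.2, pi_lt_d2])) (by positivity)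
  have h := hanti ⟨le_rfl, hx2.le⟩ ⟨hx2.le, le_rfl⟩ hx2
  have hz : G (π / 2) = 0 := by
    simp only [hG, sin_pi_div_two]
    rw [mul_div_assoc, hroot]
    field_simp
    ring
  simp only [hz, zero_div] at h
  exact (div_pos_iff_of_pos_right (by positivity)).1 h

/-- If `p₀` is the unique root in `(0,1)` of `2/π = (1/(3p²))·cos(pπ/2) + 1 − 1/(3p²)`,
then for every `0 < p ≤ p₀` and `x ∈ (0, π/2)`,
`(1/(3p²))·cos(px) + 1 − 1/(3p²) < sin x / x`. -/
theorem stmt_8 (p₀ : ℝ) (hp₀ : p₀ ∈ Set.Ioo (0 : ℝ) 1)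
    (hroot : 2 / π = 1 / (3 * p₀ ^ 2) * Real.cos (p₀ * π / 2) + 1 - 1 / (3 * p₀ ^ 2))
    (huniq : ∀ p ∈ Set.Ioo (0 : ℝ) 1,
      2 / π = 1 / (3 * p ^ 2) * Real.cos (p * π / 2) + 1 - 1 / (3 * p ^ 2) → p = p₀)
    (p : ℝ) (hp : 0 < p) (hpp₀ : p ≤ p₀) (x : ℝ) (hx : x ∈ Set.Ioo (0 : ℝ) (π / 2)) :
    1 / (3 * p ^ 2) * Real.cos (p * x) + 1 - 1 / (3 * p ^ 2) < Real.sin x / x := by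
  obtain ⟨h0, h1⟩ := hp₀
  obtain ⟨hx0, hx2⟩ := hx
  have hr : (1 - cos (p₀ * (π / 2))) / (3 * p₀ ^ 2) = 1 - 2 / π := by
    rw [hroot, mul_div_assoc]; ring
  have hm := main_q h0 (q_lt h0 h1 hr) hr hx0 hx2
  have hmono := mono_p (x := x) hp hpp₀ hx0 (by nlinarith [pi_pos])
  rw [lt_div_iff₀ hx0]
  have e : 1 / (3 * p ^ 2) * Real.cos (p * x) + 1 - 1 / (3 * p ^ 2)
      = 1 - (1 - cos (p * x)) / (3 * p ^ 2) := by ring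
  rw [e]
  rw [mul_div_assoc] at hm
  nlinarith [mul_le_mul_of_nonneg_left hmono hx0.le]
end

section
/- For every p with 0 < p ≤ √15/5 and every x > 0, one has (1/(3p²))·cosh(px) + 1 − 1/(3p²) < sinh(x)/x. Moreover, if p > 0 is such that this inequality holds for all x > 0, then p ≤ √15/5. -/
lemma coef_aux (q : ℝ) (h0 : 0 < q) (hq : q ≤ 3 / 5) (n : ℕ) :
    (2 * (n : ℝ) + 3) * q ^ n ≤ 3 := by
  induction n with
  | zero => norm_num
  | succ k ih =>
    have hk : (0 : ℝ) ≤ k := Nat.cast_nonneg k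
    have hp : 0 ≤ q ^ k := by positivity
    rw [pow_succ]
    push_cast
    have h1 : (2 * ((k : ℝ) + 1) + 3) * q ≤ 2 * k + 3 := by nlinarith
    nlinarith

lemma sinhc_hasSum (x : ℝ) (hx : 0 < x) :
    HasSum (fun n : ℕ => x ^ (2 * n) / ((2 * n + 1).factorial : ℝ)) (Real.sinh x / x) := by
  have h := (Real.hasSum_sinh x).div_const x
  have e : (fun n : ℕ => x ^ (2 * n) / ((2 * n + 1).factorial : ℝ))
      = fun n : ℕ => x ^ (2 * n + 1) / ((2 * n + 1).factorial : ℝ) / x := by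
    funext n
    rw [pow_succ]
    field_simp
  rw [e]
  exact h

lemma part_one (p : ℝ) (hp : 0 < p) (hq : p ^ 2 ≤ 3 / 5) (x : ℝ) (hx : 0 < x) :
      1 / (3 * p ^ 2) * Real.cosh (p * x) + 1 - 1 / (3 * p ^ 2) < Real.sinh x / x := by
  have h1 := ((Real.hasSum_cosh (p * x)).mul_left (1 / (3 * p ^ 2))).add
    (hasSum_ite_eq (0 : ℕ) (1 - 1 / (3 * p ^ 2)))
  have h2 := sinhc_hasSum x hx
  have key : ∀ n : ℕ, 1 / (3 * p ^ 2) * ((p * x) ^ (2 * (n + 1)) / ((2 * (n + 1)).factorial : ℝ))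
      = ((2 * (n : ℝ) + 3) * (p ^ 2) ^ n / 3) *
        (x ^ (2 * (n + 1)) / ((2 * (n + 1) + 1).factorial : ℝ)) := by
    intro n
    rw [Nat.factorial_succ (2 * (n + 1))]
    have : ((2 * (n + 1)).factorial : ℝ) ≠ 0 := by positivity
    have h3 : (2 * (n : ℝ) + 3) ≠ 0 := by positivity
    have h4 : (((2 * (n + 1) + 1 : ℕ) * (2 * (n + 1)).factorial : ℕ) : ℝ)
        = (2 * (n : ℝ) + 3) * ((2 * (n + 1)).factorial : ℝ) := by push_cast; ring
    rw [h4, mul_pow, pow_mul p, pow_succ (p ^ 2)]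
    field_simp
  have hlt := hasSum_lt (i := 3) ?_ ?_ h1 h2
  · linarith
  · intro n
    rcases n with _ | n
    · simp
    · have := coef_aux (p ^ 2) (by positivity) hq n
      have hpos : 0 < x ^ (2 * (n + 1)) / ((2 * (n + 1) + 1).factorial : ℝ) := by positivity
      simp only [key, Nat.add_eq_zero_iff, one_ne_zero, and_false, if_false, add_zero]
      nlinarith
  · have hpos : 0 < x ^ (2 * (2 + 1)) / ((2 * (2 + 1) + 1).factorial : ℝ) := by positivity
    have := key 2
    have e : (3 : ℕ) = 2 + 1 := rfl
    rw [e]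
    simp only [key, Nat.add_eq_zero_iff, one_ne_zero, and_false, if_false, add_zero]
    have hq2 : (p ^ 2) ^ 2 ≤ 9 / 25 := by nlinarith [sq_nonneg p]
    push_cast
    nlinarith

lemma sinhc_upper (x : ℝ) (hx : 0 < x) :
    Real.sinh x / x ≤ 1 + x ^ 2 / 6 + x ^ 4 / 120 + x ^ 6 * Real.cosh x := by
  have h2 := (hasSum_nat_add_iff' 3).2 (sinhc_hasSum x hx)
  have h1 := (Real.hasSum_cosh x).mul_left (x ^ 6)
  have := hasSum_le ?_ h2 h1
  · simp [Finset.sum_range_succ, Nat.factorial] at this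
    linarith
  · intro n
    have e : x ^ (2 * (n + 3)) = x ^ 6 * x ^ (2 * n) := by ring
    rw [e, mul_div_assoc]
    have : ((2 * n).factorial : ℝ) ≤ ((2 * (n + 3) + 1).factorial : ℝ) := by
      exact_mod_cast Nat.factorial_le (by omega)
    gcongr

lemma cosh_lower (y : ℝ) : 1 + y ^ 2 / 2 + y ^ 4 / 24 ≤ Real.cosh y := by
  have := sum_le_hasSum (Finset.range 3) (fun n _ => by rw [pow_mul]; positivity)
    (Real.hasSum_cosh y)
  simp [Finset.sum_range_succ, Nat.factorial] at this
  linarith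

lemma part_two (p : ℝ) (hp : 0 < p)
    (h : ∀ x : ℝ, 0 < x →
        1 / (3 * p ^ 2) * Real.cosh (p * x) + 1 - 1 / (3 * p ^ 2) < Real.sinh x / x) :
    p ^ 2 ≤ 3 / 5 := by
  have h1 : ∀ x : ℝ, 0 < x → p ^ 2 / 72 - 1 / 120 ≤ x ^ 2 * Real.cosh x := by
    intro x hx
    have a := h x hx
    have b := sinhc_upper x hx
    have c := mul_le_mul_of_nonneg_left (cosh_lower (p * x))
      (show 0 ≤ 1 / (3 * p ^ 2) by positivity)
    have e : 1 / (3 * p ^ 2) * (1 + (p * x) ^ 2 / 2 + (p * x) ^ 4 / 24)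
      = 1 / (3 * p ^ 2) + x ^ 2 / 6 + p ^ 2 * x ^ 4 / 72 := by
      field_simp
      ring
    rw [e] at c
    have d : (p ^ 2 / 72 - 1 / 120) * x ^ 4 ≤ (x ^ 2 * Real.cosh x) * x ^ 4 := by
      nlinarith
    exact le_of_mul_le_mul_right d (by positivity)
  have hc : Continuous (fun x : ℝ => x ^ 2 * Real.cosh x) :=
    (continuous_pow 2).mul Real.continuous_cosh
  have ht := (hc.tendsto 0).mono_left (nhdsWithin_le_nhds (s := Set.Ioi 0))
  have := ge_of_tendsto ht (by
    filter_upwards [self_mem_nhdsWithin] with x hx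
    exact h1 x hx)
  norm_num at this
  linarith

/-- For `0 < p ≤ √15/5` and `x > 0`,
`(1/(3p²))·cosh(px) + 1 − 1/(3p²) < sinh x / x`; moreover `√15/5` is the largest
such constant. -/
theorem stmt_9 :
    (∀ p : ℝ, 0 < p → p ≤ Real.sqrt 15 / 5 → ∀ x : ℝ, 0 < x →
      1 / (3 * p ^ 2) * Real.cosh (p * x) + 1 - 1 / (3 * p ^ 2) < Real.sinh x / x) ∧
    (∀ p : ℝ, 0 < p →
      (∀ x : ℝ, 0 < x →
        1 / (3 * p ^ 2) * Real.cosh (p * x) + 1 - 1 / (3 * p ^ 2) < Real.sinh x / x) →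
      p ≤ Real.sqrt 15 / 5) := by
  have hs : Real.sqrt 15 ^ 2 = 15 := Real.sq_sqrt (by norm_num)
  have hs0 : 0 ≤ Real.sqrt 15 := Real.sqrt_nonneg _
  constructor
  · intro p hp hle x hx
    exact part_one p hp (by nlinarith) x hx
  · intro p hp h
    have := part_two p hp h
    by_contra! hlt
    nlinarith
end

section
/- For every q ≥ 1 and every x > 0, one has sinh(x)/x < (1/(3q²))·cosh(qx) + 1 − 1/(3q²). Moreover, if q > 0 is such that this inequality holds for all x > 0, then q ≥ 1. -/
theorem aux_pos (f f' : ℝ → ℝ) (hf : ∀ x, HasDerivAt f (f' x) x) (h0 : f 0 = 0)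
    (h : ∀ x, 0 < x → 0 < f' x) (x : ℝ) (hx : 0 < x) : 0 < f x := by
  have hm : StrictMonoOn f (Set.Ici 0) := by
    apply strictMonoOn_of_deriv_pos (convex_Ici 0)
    · exact fun y _ => (hf y).continuousAt.continuousWithinAt
    · intro y hy
      rw [interior_Ici] at hy
      rw [(hf y).deriv]
      exact h y hy
  have := hm (Set.mem_Ici.2 le_rfl) (Set.mem_Ici.2 hx.le) hx
  linarith

theorem aux1 (t : ℝ) (ht : 0 < t) : Real.sinh t < t * Real.cosh t := by
  have := aux_pos (fun t => t * Real.cosh t - Real.sinh t)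
    (fun t => (1 * Real.cosh t + t * Real.sinh t) - Real.cosh t)
    (fun x => ((hasDerivAt_id x).mul (Real.hasDerivAt_cosh x)).sub (Real.hasDerivAt_sinh x))
    (by simp) (fun x hx => by
      have := mul_pos hx (Real.sinh_pos_iff.2 hx)
      linarith) t ht
  linarith

theorem aux_cosh (t : ℝ) : Real.cosh t - 1 = 2 * Real.sinh (t / 2) ^ 2 := by
  have h := Real.cosh_two_mul (t / 2)
  have h2 := Real.cosh_sq (t / 2)
  rw [show 2 * (t / 2) = t by ring] at h
  linarith

theorem aux2 (x : ℝ) (hx : 0 < x) : 3 * Real.sinh x < x * (Real.cosh x + 2) := by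
  have := aux_pos (fun t => t * (Real.cosh t + 2) - 3 * Real.sinh t)
    (fun t => (1 * (Real.cosh t + 2) + t * Real.sinh t) - 3 * Real.cosh t)
    (fun x => ((hasDerivAt_id x).mul ((Real.hasDerivAt_cosh x).add_const 2)).sub
      ((Real.hasDerivAt_sinh x).const_mul 3))
    (by simp) (fun x hx => by
      have h1 := aux_cosh x
      have h2 := Real.sinh_two_mul (x / 2)
      rw [show 2 * (x / 2) = x by ring] at h2
      have h3 := mul_pos (Real.sinh_pos_iff.2 (half_pos hx)) (sub_pos.2 (aux1 (x / 2) (half_pos hx)))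
      rw [h2]
      nlinarith) x hx
  linarith

theorem aux3 (q : ℝ) (hq : 1 ≤ q) (t : ℝ) (ht : 0 < t) :
    q * Real.sinh t ≤ Real.sinh (q * t) := by
  rcases hq.eq_or_lt with rfl | hq
  · simp
  have := aux_pos (fun t => Real.sinh (q * t) - q * Real.sinh t)
    (fun t => Real.cosh (q * t) * (q * 1) - q * Real.cosh t)
    (fun x => (((hasDerivAt_id x).const_mul q).sinh).sub ((Real.hasDerivAt_sinh x).const_mul q))
    (by simp) (fun x hx => by
      have : Real.cosh x < Real.cosh (q * x) := by
        rw [Real.cosh_lt_cosh, abs_of_pos hx, abs_of_pos (by positivity)]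
        nlinarith
      nlinarith) t ht
  linarith

/-- For `q ≥ 1` and `x > 0`, `sinh x / x < (1/(3q²))·cosh(qx) + 1 − 1/(3q²)`;
moreover `1` is the smallest such constant. -/
theorem stmt_10 :
    (∀ q : ℝ, 1 ≤ q → ∀ x : ℝ, 0 < x →
      Real.sinh x / x < 1 / (3 * q ^ 2) * Real.cosh (q * x) + 1 - 1 / (3 * q ^ 2)) ∧
    (∀ q : ℝ, 0 < q →
      (∀ x : ℝ, 0 < x →
        Real.sinh x / x < 1 / (3 * q ^ 2) * Real.cosh (q * x) + 1 - 1 / (3 * q ^ 2)) →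
      1 ≤ q) := by
  constructor
  · intro q hq x hx
    have h1 : Real.sinh x / x < (Real.cosh x + 2) / 3 := by
      rw [div_lt_div_iff₀ hx (by norm_num)]
      linarith [aux2 x hx]
    have h2 : q ^ 2 * (Real.cosh x - 1) ≤ Real.cosh (q * x) - 1 := by
      rw [aux_cosh, aux_cosh, mul_div_assoc]
      have h3 := aux3 q hq (x / 2) (half_pos hx)
      have h4 := Real.sinh_pos_iff.2 (half_pos hx)
      have h5 : (q * Real.sinh (x / 2)) ^ 2 ≤ Real.sinh (q * (x / 2)) ^ 2 :=
        pow_le_pow_left₀ (by positivity) h3 2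
      nlinarith
    have hq2 : 0 < q ^ 2 := by positivity
    have h6 : (Real.cosh x - 1) / 3 ≤ (Real.cosh (q * x) - 1) / (3 * q ^ 2) := by
      rw [div_le_div_iff₀ (by norm_num) (by positivity)]
      linarith
    have h7 : 1 / (3 * q ^ 2) * Real.cosh (q * x) + 1 - 1 / (3 * q ^ 2)
        = (Real.cosh (q * x) - 1) / (3 * q ^ 2) + 1 := by ring
    rw [h7]
    linarith
  · intro q hq h
    by_contra! hlt
    obtain ⟨d, hd⟩ : ∃ d, d = 1 - q := ⟨_, rfl⟩
    have hd0 : 0 < d := by linarith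
    obtain ⟨B, hB⟩ : ∃ B, B = 1 / (3 * q ^ 2) := ⟨_, rfl⟩
    have hB0 : 0 < B := by rw [hB]; positivity
    obtain ⟨x, hx⟩ : ∃ x, x = 4 * (B + 1) / d ^ 2 := ⟨_, rfl⟩
    have hx0 : 0 < x := by rw [hx]; positivity
    have hxd : d ^ 2 * x = 4 * (B + 1) := by rw [hx]; field_simp
    have h1 := h x hx0
    rw [← hB, div_lt_iff₀ hx0] at h1
    have hqx : 0 < q * x := by positivity
    have e1 : Real.exp (-x) ≤ 1 := Real.exp_le_one_iff.2 (by linarith)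
    have e2 : Real.exp (-(q * x)) ≤ Real.exp (q * x) := Real.exp_le_exp.2 (by linarith)
    have e3 : 1 ≤ Real.exp (q * x) := Real.one_le_exp hqx.le
    have e4 : Real.exp x = Real.exp (q * x) * Real.exp (d * x) := by
      rw [← Real.exp_add]; congr 1; rw [hd]; ring
    have e5 := Real.quadratic_le_exp_of_nonneg (x := d * x) (by positivity)
    have hs := Real.sinh_eq x
    have hc := Real.cosh_eq (q * x)
    have hc' : Real.cosh (q * x) ≤ Real.exp (q * x) := by linarith
    have h2 : B * Real.cosh (q * x) + 1 - B ≤ (B + 1) * Real.exp (q * x) := by nlinarith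
    have h3 : Real.sinh x < (B + 1) * Real.exp (q * x) * x :=
      h1.trans_le (mul_le_mul_of_nonneg_right h2 hx0.le)
    have h4 : Real.exp (q * x) * Real.exp (d * x) < Real.exp (q * x) * (2 * (B + 1) * x + 1) := by
      rw [← e4]; linarith
    have h5 := lt_of_mul_lt_mul_left h4 (Real.exp_pos _).le
    have h6 : (d * x) ^ 2 / 2 = 2 * (B + 1) * x := by
      linear_combination x / 2 * hxd
    have : 0 < d * x := by positivity
    linarith
end

section
/- For every x > 0, the chain of inequalities cosh(x/√3) < (3/4)·cosh(2x/3) + 1/4 < (2/3)·cosh(x/√2) + 1/3 < (16/27)·cosh(3x/4) + 11/27 < (5/9)·cosh(√15·x/5) + 4/9 < sinh(x)/x < (1/3)·cosh(x) + 2/3 < (1/2)·cosh²(x/√3) + 1/2 holds. -/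
lemma hsum_cosh (a s x : ℝ) (hs : 0 < s) (ha : a ^ 2 = s * x ^ 2) :
    HasSum (fun n : ℕ => s ^ n * (x ^ 2) ^ (n + 1) / ((2 * (n + 1)).factorial : ℝ))
      ((Real.cosh a - 1) / s) := by
  have h := (hasSum_nat_add_iff' (f := fun n : ℕ => a ^ (2 * n) / ((2 * n).factorial : ℝ)) 1).2
    (Real.hasSum_cosh a)
  have h2 := h.div_const s
  simp only [Finset.range_one, Finset.sum_singleton, Nat.mul_zero, pow_zero, Nat.factorial_zero,
    Nat.cast_one, div_one] at h2
  refine (congrArg (fun f : ℕ → ℝ => HasSum f _) (funext fun n => ?_)).mpr h2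
  rw [pow_mul, ha, mul_pow, pow_succ s]
  field_simp

lemma hsum_sinh (x : ℝ) (hx : 0 < x) :
    HasSum (fun n : ℕ => (x ^ 2) ^ (n + 1) / ((2 * (n + 1) + 1).factorial : ℝ))
      (Real.sinh x / x - 1) := by
  have h := (Real.hasSum_sinh x).div_const x
  have h2 := (hasSum_nat_add_iff' 1).2 h
  simp only [Finset.range_one, Finset.sum_singleton, Nat.mul_zero, Nat.zero_add, pow_one,
    Nat.factorial_one, Nat.cast_one, div_one, div_self hx.ne'] at h2
  refine (congrArg (fun f : ℕ → ℝ => HasSum f _) (funext fun n => ?_)).mpr h2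
  rw [pow_succ x (2 * (n + 1)), pow_mul]
  field_simp

lemma cosh_cmp (a b s t x : ℝ) (hx : 0 < x) (hs : 0 < s) (hst : s < t)
    (ha : a ^ 2 = s * x ^ 2) (hb : b ^ 2 = t * x ^ 2) :
    (Real.cosh a - 1) / s < (Real.cosh b - 1) / t := by
  refine hasSum_lt (i := 1) ?_ ?_ (hsum_cosh a s x hs ha) (hsum_cosh b t x (hs.trans hst) hb)
  · intro n
    beta_reduce
    gcongr
  · beta_reduce
    gcongr

lemma aux_pow_s12 (n : ℕ) : (3 / 5 : ℝ) ^ n * (2 * n + 3) ≤ 3 := by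
  induction n with
  | zero => norm_num
  | succ k ih =>
    have hp : (0 : ℝ) < (3 / 5) ^ k := by positivity
    have hk : (0 : ℝ) ≤ k := by positivity
    rw [pow_succ]; push_cast
    nlinarith [mul_nonneg hp.le hk]

lemma fact_split (n : ℕ) : ((2 * (n + 1) + 1).factorial : ℝ)
    = (2 * n + 3) * ((2 * (n + 1)).factorial : ℝ) := by
  rw [Nat.factorial_succ]; push_cast; ring

lemma low (a x : ℝ) (hx : 0 < x) (ha : a ^ 2 = 3 / 5 * x ^ 2) :
    (Real.cosh a - 1) / (3 / 5) < 3 * (Real.sinh x / x - 1) := by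
  refine hasSum_lt (i := 2) ?_ ?_ (hsum_cosh a _ x (by norm_num) ha) ((hsum_sinh x hx).mul_left 3)
  · intro n
    beta_reduce
    have h := aux_pow_s12 n
    rw [fact_split, ← mul_div_assoc, ← div_div, div_le_div_iff_of_pos_right (by positivity),
      le_div_iff₀ (by positivity)]
    have : 0 ≤ (x ^ 2) ^ (n + 1) := by positivity
    nlinarith
  · norm_num [Nat.factorial]
    have : 0 < (x ^ 2) ^ 3 := by positivity
    nlinarith

lemma high (x : ℝ) (hx : 0 < x) :
    3 * (Real.sinh x / x - 1) < (Real.cosh x - 1) / 1 := by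
  refine hasSum_lt (i := 1) ?_ ?_ ((hsum_sinh x hx).mul_left 3)
    (hsum_cosh x 1 x (by norm_num) (by ring))
  · intro n
    beta_reduce
    rw [fact_split, ← mul_div_assoc, ← div_div, div_le_div_iff_of_pos_right (by positivity),
      div_le_iff₀ (by positivity), one_pow]
    have : 0 ≤ (x ^ 2) ^ (n + 1) := by positivity
    have hk : (0 : ℝ) ≤ n := by positivity
    nlinarith [mul_nonneg this hk]
  · norm_num [Nat.factorial]
    have : 0 < (x ^ 2) ^ 2 := by positivity
    nlinarith

/-- For `x > 0`, the chain of inequalities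
`cosh(x/√3) < (3/4)cosh(2x/3) + 1/4 < (2/3)cosh(x/√2) + 1/3
 < (16/27)cosh(3x/4) + 11/27 < (5/9)cosh(√15 x/5) + 4/9 < sinh x / x
 < (1/3)cosh x + 2/3 < (1/2)cosh²(x/√3) + 1/2`. -/
theorem stmt_12 (x : ℝ) (hx : 0 < x) :
    Real.cosh (x / Real.sqrt 3) < 3 / 4 * Real.cosh (2 * x / 3) + 1 / 4 ∧
    3 / 4 * Real.cosh (2 * x / 3) + 1 / 4 < 2 / 3 * Real.cosh (x / Real.sqrt 2) + 1 / 3 ∧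
    2 / 3 * Real.cosh (x / Real.sqrt 2) + 1 / 3 < 16 / 27 * Real.cosh (3 * x / 4) + 11 / 27 ∧
    16 / 27 * Real.cosh (3 * x / 4) + 11 / 27 < 5 / 9 * Real.cosh (Real.sqrt 15 * x / 5) + 4 / 9 ∧
    5 / 9 * Real.cosh (Real.sqrt 15 * x / 5) + 4 / 9 < Real.sinh x / x ∧
    Real.sinh x / x < 1 / 3 * Real.cosh x + 2 / 3 ∧
    1 / 3 * Real.cosh x + 2 / 3 < 1 / 2 * Real.cosh (x / Real.sqrt 3) ^ 2 + 1 / 2 := by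
  have h3 : Real.sqrt 3 ^ 2 = 3 := Real.sq_sqrt (by norm_num)
  have h2 : Real.sqrt 2 ^ 2 = 2 := Real.sq_sqrt (by norm_num)
  have h15 : Real.sqrt 15 ^ 2 = 15 := Real.sq_sqrt (by norm_num)
  have e1 : (x / Real.sqrt 3) ^ 2 = 1 / 3 * x ^ 2 := by rw [div_pow, h3]; ring
  have e2 : (2 * x / 3) ^ 2 = 4 / 9 * x ^ 2 := by ring
  have e3 : (x / Real.sqrt 2) ^ 2 = 1 / 2 * x ^ 2 := by rw [div_pow, h2]; ring
  have e4 : (3 * x / 4) ^ 2 = 9 / 16 * x ^ 2 := by ring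
  have e5 : (Real.sqrt 15 * x / 5) ^ 2 = 3 / 5 * x ^ 2 := by rw [div_pow, mul_pow, h15]; ring
  have e6 : x ^ 2 = 1 * x ^ 2 := by ring
  have e7 : (2 * (x / Real.sqrt 3)) ^ 2 = 4 / 3 * x ^ 2 := by rw [mul_pow, e1]; ring
  have c1 := cosh_cmp _ _ _ _ x hx (by norm_num) (by norm_num) e1 e2
  have c2 := cosh_cmp _ _ _ _ x hx (by norm_num) (by norm_num) e2 e3
  have c3 := cosh_cmp _ _ _ _ x hx (by norm_num) (by norm_num) e3 e4
  have c4 := cosh_cmp _ _ _ _ x hx (by norm_num) (by norm_num) e4 e5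
  have c5 := low _ x hx e5
  have c6 := high x hx
  have c7 := cosh_cmp _ _ _ _ x hx (by norm_num) (by norm_num) e6 e7
  have d := Real.cosh_two_mul (x / Real.sqrt 3)
  have d' := Real.cosh_sq (x / Real.sqrt 3)
  refine ⟨?_, ?_, ?_, ?_, ?_, ?_, ?_⟩ <;> linarith
end

section
/- Let p ∈ (0, √15/5], set c₀(p) = (π/2)⁻⁴·(2/π − ((1/(3p²))·cos(pπ/2) + 1 − 1/(3p²))) and c₁(p) = (3 − 5p²)/360. Then for every x ∈ (0, π/2), ((1/(3p²))·cos(px) + 1 − 1/(3p²)) + c₀(p)·x⁴ < sin(x)/x < ((1/(3p²))·cos(px) + 1 − 1/(3p²)) + c₁(p)·x⁴. -/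
open Real

noncomputable def aco (q : ℝ) (k : ℕ) : ℝ :=
  (1 - (2 * k + 5) * q ^ (k + 1) / 3) / ((2 * k + 5).factorial : ℝ)

lemma hasSum_tr {f g : ℕ → ℝ} {a b : ℝ} (h : HasSum g b) (h1 : f = g) (h2 : a = b) :
    HasSum f a := by
  subst h1; subst h2; exact h

lemma aux_q (q : ℝ) (h0 : 0 < q) (h1 : q ≤ 3 / 5) (k : ℕ) :
    (2 * (k : ℝ) + 7) * q ^ (k + 2) ≤ 63 / 25 := by
  induction k with
  | zero => norm_num; nlinarith
  | succ k ih =>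
    have hk : (0 : ℝ) ≤ k := Nat.cast_nonneg k
    have hq : 0 < q ^ (k + 2) := by positivity
    have e : q ^ (k + 1 + 2) = q * q ^ (k + 2) := by ring
    rw [e]; push_cast
    have : (2 * ((k : ℝ) + 1) + 7) * q ≤ 2 * (k : ℝ) + 7 := by nlinarith
    calc (2 * ((k : ℝ) + 1) + 7) * (q * q ^ (k + 2))
        = ((2 * ((k : ℝ) + 1) + 7) * q) * q ^ (k + 2) := by ring
      _ ≤ (2 * (k : ℝ) + 7) * q ^ (k + 2) := by gcongr
      _ ≤ _ := ih

lemma aco_pos (q : ℝ) (h0 : 0 < q) (h1 : q ≤ 3 / 5) (k : ℕ) : 0 < aco q (k + 1) := by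
  have := aux_q q h0 h1 k
  unfold aco
  apply div_pos _ (by positivity)
  push_cast
  have e : (2 * ((k : ℝ) + 1) + 5) * q ^ (k + 1 + 1) = (2 * (k : ℝ) + 7) * q ^ (k + 2) := by ring
  rw [e]; linarith

lemma aco_ratio (q : ℝ) (h0 : 0 < q) (h1 : q ≤ 3 / 5) (k : ℕ) :
    10 * aco q (k + 2) ≤ aco q (k + 1) := by
  have := aux_q q h0 h1 k
  have hk : (0 : ℝ) ≤ k := Nat.cast_nonneg k
  unfold aco
  have e : (2 * ((k : ℝ) + 1) + 5) * q ^ (k + 1 + 1) = (2 * (k : ℝ) + 7) * q ^ (k + 2) := by ring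
  have ef : ((2 * (k + 2) + 5).factorial : ℝ)
      = (2 * k + 9) * (2 * k + 8) * ((2 * (k + 1) + 5).factorial : ℝ) := by
    have : 2 * (k + 2) + 5 = (2 * (k + 1) + 5) + 1 + 1 := by ring
    rw [this, Nat.factorial_succ, Nat.factorial_succ]; push_cast; ring
  have hF : (0 : ℝ) < ((2 * (k + 1) + 5).factorial : ℝ) := by positivity
  rw [ef]
  set F : ℝ := ((2 * (k + 1) + 5).factorial : ℝ)
  rw [← mul_div_assoc, div_le_div_iff₀ (by positivity) hF]
  push_cast
  rw [e]
  have hX : 0 ≤ (2 * ((k : ℝ) + 2) + 5) * q ^ (k + 2 + 1) := by positivity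
  set X := (2 * ((k : ℝ) + 2) + 5) * q ^ (k + 2 + 1)
  set Y := (2 * (k : ℝ) + 7) * q ^ (k + 2)
  have h2 : (72 : ℝ) ≤ (2 * k + 9) * (2 * k + 8) := by nlinarith
  have h3 : 10 * (1 - X / 3) ≤ (1 - Y / 3) * ((2 * k + 9) * (2 * k + 8)) := by nlinarith
  nlinarith

lemma g_anti (q : ℝ) (h0 : 0 < q) (h1 : q ≤ 3 / 5) (y z l m : ℝ) (hy : 0 ≤ y) (hyz : y < z)
    (hz : y + z ≤ 5)
    (hl : HasSum (fun k : ℕ => (-1) ^ k * aco q k * y ^ k) l)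
    (hm : HasSum (fun k : ℕ => (-1) ^ k * aco q k * z ^ k) m) : m < l := by
  have hs := hl.sub hm
  have hs1 := (hasSum_nat_add_iff' 1).2 hs
  have hz0 : 0 < z := by linarith
  let b : ℕ → ℝ := fun k => aco q (k + 1) * (z ^ (k + 1) - y ^ (k + 1))
  have hb : HasSum (fun k : ℕ => (-1) ^ k * b k) (l - m) := by
    refine hasSum_tr hs1 ?_ ?_
    · funext k; simp only [b]; ring
    · simp
  have hd : ∀ k : ℕ, 0 < z ^ (k + 1) - y ^ (k + 1) := fun k =>
    sub_pos.2 (pow_lt_pow_left₀ hyz hy (by omega))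
  have hbp : ∀ k, 0 < b k := fun k => mul_pos (aco_pos q h0 h1 k) (hd k)
  have hbr : ∀ k, 2 * b (k + 1) ≤ b k := by
    intro k
    have r := aco_ratio q h0 h1 k
    have p1 := aco_pos q h0 h1 (k + 1)
    have hyk : y ^ k ≤ z ^ k := pow_le_pow_left₀ hy hyz.le k
    have d : z ^ (k + 1 + 1) - y ^ (k + 1 + 1) ≤ 5 * (z ^ (k + 1) - y ^ (k + 1)) := by
      have : z ^ (k + 1 + 1) - y ^ (k + 1 + 1)
          = (y + z) * (z ^ (k + 1) - y ^ (k + 1)) - y * z * (z ^ k - y ^ k) := by ring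
      have h5 : 0 ≤ y * z * (z ^ k - y ^ k) :=
        mul_nonneg (mul_nonneg hy hz0.le) (sub_nonneg.2 hyk)
      have := mul_le_mul_of_nonneg_right hz (hd k).le
      linarith
    simp only [b]
    calc 2 * (aco q (k + 1 + 1) * (z ^ (k + 1 + 1) - y ^ (k + 1 + 1)))
        ≤ 2 * (aco q (k + 1 + 1) * (5 * (z ^ (k + 1) - y ^ (k + 1)))) := by gcongr
      _ = (10 * aco q (k + 2)) * (z ^ (k + 1) - y ^ (k + 1)) := by ring
      _ ≤ _ := mul_le_mul_of_nonneg_right r (hd k).le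
  have ha : Antitone b := antitone_nat_of_succ_le fun k => by
    have := hbr k; have := hbp (k + 1); linarith
  have := ha.alternating_series_le_tendsto hb.tendsto_sum_nat 1
  simp [Finset.sum_range_succ] at this
  have := hbr 0; have := hbp 1
  simp at *
  linarith

lemma g_sum (p x : ℝ) (hp : 0 < p) (hx : 0 < x) :
    HasSum (fun k : ℕ => (-1) ^ k * aco (p ^ 2) k * (x ^ 2) ^ k)
      ((sin x / x - (1 / (3 * p ^ 2) * cos (p * x) + 1 - 1 / (3 * p ^ 2))) / x ^ 4) := by
  have hs := (Real.hasSum_sin x).div_const x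
  have hc := (Real.hasSum_cos (p * x)).mul_left (1 / (3 * p ^ 2))
  have h := ((hasSum_nat_add_iff' 2).2 (hs.sub hc)).div_const (x ^ 4)
  refine hasSum_tr h ?_ ?_
  · funext k
    unfold aco
    have e1 : 2 * (k + 2) + 1 = 2 * k + 5 := by ring
    have e2 : ((2 * k + 5).factorial : ℝ) = (2 * k + 5) * ((2 * (k + 2)).factorial : ℝ) := by
      have : 2 * k + 5 = 2 * (k + 2) + 1 := by ring
      rw [this, Nat.factorial_succ]; push_cast; ring
    rw [e1, e2]
    have : (0 : ℝ) < ((2 * (k + 2)).factorial : ℝ) := by positivity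
    have h5 : (2 * (k : ℝ) + 5) ≠ 0 := by positivity
    set F : ℝ := ((2 * (k + 2)).factorial : ℝ)
    have e3 : x ^ (2 * k + 5) = (x ^ 2) ^ k * x ^ 5 := by ring
    have e4 : (p * x) ^ (2 * (k + 2)) = (p ^ 2) ^ k * p ^ 4 * (x ^ 2) ^ k * x ^ 4 := by ring
    have e5 : (-1 : ℝ) ^ (k + 2) = (-1) ^ k := by ring
    rw [e3, e4, e5, pow_succ (p ^ 2) k]
    generalize (x ^ 2) ^ k = u
    generalize (p ^ 2) ^ k = v
    generalize (-1 : ℝ) ^ k = w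
    field_simp
  · congr 1
    simp [Finset.sum_range_succ]
    norm_num [Nat.factorial]
    field_simp
    ring

theorem stmt_13 (p : ℝ) (hp : p ∈ Set.Ioc (0 : ℝ) (Real.sqrt 15 / 5))
    (c₀ c₁ : ℝ)
    (hc₀ : c₀ = ((π / 2) ^ 4)⁻¹ *
      (2 / π - (1 / (3 * p ^ 2) * Real.cos (p * π / 2) + 1 - 1 / (3 * p ^ 2))))
    (hc₁ : c₁ = (3 - 5 * p ^ 2) / 360)
    (x : ℝ) (hx : x ∈ Set.Ioo (0 : ℝ) (π / 2)) :
    1 / (3 * p ^ 2) * Real.cos (p * x) + 1 - 1 / (3 * p ^ 2) + c₀ * x ^ 4 < Real.sin x / x ∧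
    Real.sin x / x < 1 / (3 * p ^ 2) * Real.cos (p * x) + 1 - 1 / (3 * p ^ 2) + c₁ * x ^ 4 := by
  obtain ⟨hp0, hp1⟩ := hp
  obtain ⟨hx0, hx1⟩ := hx
  have hq0 : 0 < p ^ 2 := by positivity
  have hq1 : p ^ 2 ≤ 3 / 5 := by
    have h15 : Real.sqrt 15 ^ 2 = 15 := Real.sq_sqrt (by norm_num)
    have := pow_le_pow_left₀ hp0.le hp1 2
    rw [div_pow, h15] at this
    linarith
  have hpi := Real.pi_lt_d2
  have hpi0 := Real.pi_pos
  have hsx := g_sum p x hp0 hx0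
  have hsb := g_sum p (π / 2) hp0 (by positivity)
  have hs0 : HasSum (fun k : ℕ => (-1) ^ k * aco (p ^ 2) k * (0 : ℝ) ^ k) c₁ := by
    have : c₁ = (-1) ^ 0 * aco (p ^ 2) 0 * (0 : ℝ) ^ 0 := by
      rw [hc₁]; unfold aco; norm_num [Nat.factorial]; ring
    rw [this]
    exact hasSum_single 0 fun k hk => by simp [hk]
  have hxb : x ^ 2 < (π / 2) ^ 2 := pow_lt_pow_left₀ hx1 hx0.le (by norm_num)
  have hb2 : (π / 2) ^ 2 ≤ 5 / 2 := by nlinarith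
  have A := g_anti _ hq0 hq1 _ _ _ _ (by positivity) hxb (by linarith) hsx hsb
  have B := g_anti _ hq0 hq1 _ _ _ _ le_rfl (by positivity) (by linarith) hs0 hsx
  have hx4 : 0 < x ^ 4 := by positivity
  have ec : (sin (π / 2) / (π / 2) -
      (1 / (3 * p ^ 2) * cos (p * (π / 2)) + 1 - 1 / (3 * p ^ 2))) / (π / 2) ^ 4 = c₀ := by
    rw [hc₀, Real.sin_pi_div_two, one_div_div, ← mul_div_assoc, div_eq_inv_mul]
  rw [ec, lt_div_iff₀ hx4] at A
  rw [div_lt_iff₀ hx4] at B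
  constructor <;> linarith
end

section
/- Let p ∈ (0, √15/5], set c₀(p) = (π/2)⁻⁴·(2/π − ((1/(3p²))·cos(pπ/2) + 1 − 1/(3p²))) and c₁(p) = (3 − 5p²)/360, and define Si(t) = ∫₀ᵗ (sin x)/x dx. Then for every t ∈ (0, π/2), sin(pt)/(3p³) + (1 − 1/(3p²))·t + (c₀(p)/5)·t⁵ < Si(t) < sin(pt)/(3p³) + (1 − 1/(3p²))·t + (c₁(p)/5)·t⁵. -/
open Real

lemma aux_nonneg (g g' : ℝ → ℝ) (hg : ∀ x, HasDerivAt g (g' x) x) (h0 : g 0 = 0)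
    (hp : ∀ x, 0 ≤ x → 0 ≤ g' x) : ∀ x, 0 ≤ x → 0 ≤ g x := by
  intro x hx
  have hm : MonotoneOn g (Set.Ici 0) := by
    apply monotoneOn_of_deriv_nonneg (convex_Ici 0)
    · exact fun y _ => (hg y).continuousAt.continuousWithinAt
    · exact fun y _ => (hg y).differentiableAt.differentiableWithinAt
    · intro y hy
      rw [(hg y).deriv]
      rw [interior_Ici] at hy
      exact hp y (le_of_lt hy)
  have := hm (Set.mem_Ici.2 le_rfl) (Set.mem_Ici.2 hx) hx
  rwa [h0] at this

lemma aux_pos_s14 (g g' : ℝ → ℝ) (t : ℝ) (ht : 0 < t) (hg : ∀ x, HasDerivAt g (g' x) x)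
    (h0 : g 0 = 0) (hp : ∀ x, 0 < x → x < t → 0 < g' x) : 0 < g t := by
  have hm : StrictMonoOn g (Set.Icc 0 t) := by
    apply strictMonoOn_of_deriv_pos (convex_Icc 0 t)
    · exact fun y _ => (hg y).continuousAt.continuousWithinAt
    · intro y hy
      rw [(hg y).deriv]
      rw [interior_Icc] at hy
      exact hp y hy.1 hy.2
  have := hm (Set.left_mem_Icc.2 ht.le) (Set.right_mem_Icc.2 ht.le) ht
  rwa [h0] at this

lemma cos_b1 (x : ℝ) (hx : 0 ≤ x) : cos x ≤ 1 := cos_le_one x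

lemma sin_b1 (x : ℝ) (hx : 0 ≤ x) : sin x ≤ x := by
  have h := aux_nonneg (fun x => (x) - sin x) (fun x => (1) - cos x) ?_ (by simp)
    (fun y hy => sub_nonneg.2 (cos_b1 y hy)) x hx
  · exact sub_nonneg.1 h
  · intro x
    refine HasDerivAt.congr_deriv ((hasDerivAt_id' x).fun_sub (hasDerivAt_sin x)) ?_
    try norm_num
    all_goals try ring

lemma cos_b2 (x : ℝ) (hx : 0 ≤ x) : 1 - x^2/2 ≤ cos x := by
  have h := aux_nonneg (fun x => cos x - (1 - x^2/2)) (fun x => (x) - sin x) ?_ (by simp)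
    (fun y hy => sub_nonneg.2 (sin_b1 y hy)) x hx
  · exact sub_nonneg.1 h
  · intro x
    refine HasDerivAt.congr_deriv ((hasDerivAt_cos x).fun_sub ((hasDerivAt_const x (1:ℝ)).fun_sub ((hasDerivAt_pow 2 x).div_const 2))) ?_
    try norm_num
    all_goals try ring

lemma sin_b2 (x : ℝ) (hx : 0 ≤ x) : x - x^3/6 ≤ sin x := by
  have h := aux_nonneg (fun x => sin x - (x - x^3/6)) (fun x => cos x - (1 - x^2/2)) ?_ (by simp)
    (fun y hy => sub_nonneg.2 (cos_b2 y hy)) x hx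
  · exact sub_nonneg.1 h
  · intro x
    refine HasDerivAt.congr_deriv ((hasDerivAt_sin x).fun_sub ((hasDerivAt_id' x).fun_sub ((hasDerivAt_pow 3 x).div_const 6))) ?_
    try norm_num
    all_goals try ring

lemma cos_b3 (x : ℝ) (hx : 0 ≤ x) : cos x ≤ 1 - x^2/2 + x^4/24 := by
  have h := aux_nonneg (fun x => (1 - x^2/2 + x^4/24) - cos x) (fun x => sin x - (x - x^3/6)) ?_ (by simp)
    (fun y hy => sub_nonneg.2 (sin_b2 y hy)) x hx
  · exact sub_nonneg.1 h
  · intro x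
    refine HasDerivAt.congr_deriv ((((hasDerivAt_const x (1:ℝ)).fun_sub ((hasDerivAt_pow 2 x).div_const 2)).fun_add ((hasDerivAt_pow 4 x).div_const 24)).fun_sub (hasDerivAt_cos x)) ?_
    try norm_num
    all_goals try ring

lemma sin_b3 (x : ℝ) (hx : 0 ≤ x) : sin x ≤ x - x^3/6 + x^5/120 := by
  have h := aux_nonneg (fun x => (x - x^3/6 + x^5/120) - sin x) (fun x => (1 - x^2/2 + x^4/24) - cos x) ?_ (by simp)
    (fun y hy => sub_nonneg.2 (cos_b3 y hy)) x hx
  · exact sub_nonneg.1 h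
  · intro x
    refine HasDerivAt.congr_deriv ((((hasDerivAt_id' x).fun_sub ((hasDerivAt_pow 3 x).div_const 6)).fun_add ((hasDerivAt_pow 5 x).div_const 120)).fun_sub (hasDerivAt_sin x)) ?_
    try norm_num
    all_goals try ring

lemma cos_b4 (x : ℝ) (hx : 0 ≤ x) : 1 - x^2/2 + x^4/24 - x^6/720 ≤ cos x := by
  have h := aux_nonneg (fun x => cos x - (1 - x^2/2 + x^4/24 - x^6/720)) (fun x => (x - x^3/6 + x^5/120) - sin x) ?_ (by simp)
    (fun y hy => sub_nonneg.2 (sin_b3 y hy)) x hx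
  · exact sub_nonneg.1 h
  · intro x
    refine HasDerivAt.congr_deriv ((hasDerivAt_cos x).fun_sub ((((hasDerivAt_const x (1:ℝ)).fun_sub ((hasDerivAt_pow 2 x).div_const 2)).fun_add ((hasDerivAt_pow 4 x).div_const 24)).fun_sub ((hasDerivAt_pow 6 x).div_const 720))) ?_
    try norm_num
    all_goals try ring

lemma sin_b4 (x : ℝ) (hx : 0 ≤ x) : x - x^3/6 + x^5/120 - x^7/5040 ≤ sin x := by
  have h := aux_nonneg (fun x => sin x - (x - x^3/6 + x^5/120 - x^7/5040)) (fun x => cos x - (1 - x^2/2 + x^4/24 - x^6/720)) ?_ (by simp)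
    (fun y hy => sub_nonneg.2 (cos_b4 y hy)) x hx
  · exact sub_nonneg.1 h
  · intro x
    refine HasDerivAt.congr_deriv ((hasDerivAt_sin x).fun_sub ((((hasDerivAt_id' x).fun_sub ((hasDerivAt_pow 3 x).div_const 6)).fun_add ((hasDerivAt_pow 5 x).div_const 120)).fun_sub ((hasDerivAt_pow 7 x).div_const 5040))) ?_
    try norm_num
    all_goals try ring

lemma cos_b5 (x : ℝ) (hx : 0 ≤ x) : cos x ≤ 1 - x^2/2 + x^4/24 - x^6/720 + x^8/40320 := by
  have h := aux_nonneg (fun x => (1 - x^2/2 + x^4/24 - x^6/720 + x^8/40320) - cos x) (fun x => sin x - (x - x^3/6 + x^5/120 - x^7/5040)) ?_ (by simp)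
    (fun y hy => sub_nonneg.2 (sin_b4 y hy)) x hx
  · exact sub_nonneg.1 h
  · intro x
    refine HasDerivAt.congr_deriv ((((((hasDerivAt_const x (1:ℝ)).fun_sub ((hasDerivAt_pow 2 x).div_const 2)).fun_add ((hasDerivAt_pow 4 x).div_const 24)).fun_sub ((hasDerivAt_pow 6 x).div_const 720)).fun_add ((hasDerivAt_pow 8 x).div_const 40320)).fun_sub (hasDerivAt_cos x)) ?_
    try norm_num
    all_goals try ring

lemma sin_b5 (x : ℝ) (hx : 0 ≤ x) : sin x ≤ x - x^3/6 + x^5/120 - x^7/5040 + x^9/362880 := by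
  have h := aux_nonneg (fun x => (x - x^3/6 + x^5/120 - x^7/5040 + x^9/362880) - sin x) (fun x => (1 - x^2/2 + x^4/24 - x^6/720 + x^8/40320) - cos x) ?_ (by simp)
    (fun y hy => sub_nonneg.2 (cos_b5 y hy)) x hx
  · exact sub_nonneg.1 h
  · intro x
    refine HasDerivAt.congr_deriv ((((((hasDerivAt_id' x).fun_sub ((hasDerivAt_pow 3 x).div_const 6)).fun_add ((hasDerivAt_pow 5 x).div_const 120)).fun_sub ((hasDerivAt_pow 7 x).div_const 5040)).fun_add ((hasDerivAt_pow 9 x).div_const 362880)).fun_sub (hasDerivAt_sin x)) ?_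
    try norm_num
    all_goals try ring

lemma cos_b6 (x : ℝ) (hx : 0 ≤ x) : 1 - x^2/2 + x^4/24 - x^6/720 + x^8/40320 - x^10/3628800 ≤ cos x := by
  have h := aux_nonneg (fun x => cos x - (1 - x^2/2 + x^4/24 - x^6/720 + x^8/40320 - x^10/3628800)) (fun x => (x - x^3/6 + x^5/120 - x^7/5040 + x^9/362880) - sin x) ?_ (by simp)
    (fun y hy => sub_nonneg.2 (sin_b5 y hy)) x hx
  · exact sub_nonneg.1 h
  · intro x
    refine HasDerivAt.congr_deriv ((hasDerivAt_cos x).fun_sub ((((((hasDerivAt_const x (1:ℝ)).fun_sub ((hasDerivAt_pow 2 x).div_const 2)).fun_add ((hasDerivAt_pow 4 x).div_const 24)).fun_sub ((hasDerivAt_pow 6 x).div_const 720)).fun_add ((hasDerivAt_pow 8 x).div_const 40320)).fun_sub ((hasDerivAt_pow 10 x).div_const 3628800))) ?_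
    try norm_num
    all_goals try ring

lemma sin_b6 (x : ℝ) (hx : 0 ≤ x) : x - x^3/6 + x^5/120 - x^7/5040 + x^9/362880 - x^11/39916800 ≤ sin x := by
  have h := aux_nonneg (fun x => sin x - (x - x^3/6 + x^5/120 - x^7/5040 + x^9/362880 - x^11/39916800)) (fun x => cos x - (1 - x^2/2 + x^4/24 - x^6/720 + x^8/40320 - x^10/3628800)) ?_ (by simp)
    (fun y hy => sub_nonneg.2 (cos_b6 y hy)) x hx
  · exact sub_nonneg.1 h
  · intro x
    refine HasDerivAt.congr_deriv ((hasDerivAt_sin x).fun_sub ((((((hasDerivAt_id' x).fun_sub ((hasDerivAt_pow 3 x).div_const 6)).fun_add ((hasDerivAt_pow 5 x).div_const 120)).fun_sub ((hasDerivAt_pow 7 x).div_const 5040)).fun_add ((hasDerivAt_pow 9 x).div_const 362880)).fun_sub ((hasDerivAt_pow 11 x).div_const 39916800))) ?_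
    try norm_num
    all_goals try ring


lemma key_upper (p x : ℝ) (hp : 0 < p) (hq : p ^ 2 ≤ 3 / 5) (hx : 0 < x) (hy : x ^ 2 < 5 / 2) :
    sin x / x < cos (p * x) / (3 * p ^ 2) + (1 - 1 / (3 * p ^ 2)) + (3 - 5 * p ^ 2) / 360 * x ^ 4 := by
  have h1 := sin_b5 x hx.le
  have h2 := cos_b4 (p * x) (by positivity)
  have h3 : sin x / x ≤ 1 - x ^ 2 / 6 + x ^ 4 / 120 - x ^ 6 / 5040 + x ^ 8 / 362880 := by
    rw [div_le_iff₀ hx]; linarith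
  have h4 : 1 / (3 * p ^ 2) - x ^ 2 / 6 + p ^ 2 * x ^ 4 / 72 - p ^ 4 * x ^ 6 / 2160 ≤
      cos (p * x) / (3 * p ^ 2) := by
    rw [le_div_iff₀ (by positivity)]
    refine le_trans (le_of_eq ?_) h2
    field_simp
    ring
  have h5 : p ^ 4 ≤ 9 / 25 := by nlinarith [sq_nonneg p]
  have h6 : 0 < x ^ 6 * (1 / 5040 - p ^ 4 / 2160 - x ^ 2 / 362880) := by
    apply mul_pos (by positivity); linarith
  have e : 1 / (3 * p ^ 2) - 1 / (3 * p ^ 2) = 0 := sub_self _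
  nlinarith

lemma key_H (p x : ℝ) (hp : 0 < p) (hq : p ^ 2 ≤ 3 / 5) (hx : 0 < x) (hy : x ^ 2 < 5 / 2) :
    cos x - 5 * (sin x / x) + x * sin (p * x) / (3 * p) + 4 * (cos (p * x) / (3 * p ^ 2))
      + 4 * (1 - 1 / (3 * p ^ 2)) < 0 := by
  have h1 := sin_b6 x hx.le
  have h2 := cos_b5 (p * x) (by positivity)
  have h3 := cos_b5 x hx.le
  have h4 := sin_b3 (p * x) (by positivity)
  have h5 : 1 - x ^ 2 / 6 + x ^ 4 / 120 - x ^ 6 / 5040 + x ^ 8 / 362880 - x ^ 10 / 39916800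
      ≤ sin x / x := by
    rw [le_div_iff₀ hx]; linarith
  have h6 : cos (p * x) / (3 * p ^ 2) ≤ 1 / (3 * p ^ 2) - x ^ 2 / 6 + p ^ 2 * x ^ 4 / 72
      - p ^ 4 * x ^ 6 / 2160 + p ^ 6 * x ^ 8 / 120960 := by
    rw [div_le_iff₀ (by positivity)]
    refine le_trans h2 (le_of_eq ?_)
    field_simp
    ring
  have h7 : x * sin (p * x) / (3 * p) ≤ x ^ 2 / 3 - p ^ 2 * x ^ 4 / 18 + p ^ 4 * x ^ 6 / 360 := by
    rw [div_le_iff₀ (by positivity)]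
    refine le_trans (mul_le_mul_of_nonneg_left h4 hx.le) (le_of_eq ?_)
    field_simp
    ring
  have h8 : p ^ 4 ≤ 9 / 25 := by nlinarith [sq_nonneg p]
  have h9 : p ^ 6 ≤ 27 / 125 := by
    have : p ^ 6 = p ^ 4 * p ^ 2 := by ring
    rw [this]
    calc p ^ 4 * p ^ 2 ≤ 9 / 25 * (3 / 5) := by gcongr
      _ = _ := by norm_num
  have h10 : x ^ 2 * (1 / 90720 + p ^ 6 / 30240) ≤ 5 / 2 * (1 / 90720 + 27 / 125 / 30240) := by
    gcongr
  have h11 : x ^ 4 ≤ 25 / 4 := by nlinarith [sq_nonneg x]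
  have h12 : 0 < x ^ 6 * (1 / 2520 - p ^ 4 / 1080 - x ^ 2 * (1 / 90720 + p ^ 6 / 30240)
      - x ^ 4 / 7983360) := by
    apply mul_pos (by positivity); linarith
  linarith

lemma key_lower (p x : ℝ) (hp : 0 < p) (hq : p ^ 2 ≤ 3 / 5) (hx : 0 < x) (hy : x < π / 2) :
    cos (p * x) / (3 * p ^ 2) + (1 - 1 / (3 * p ^ 2)) + ((π / 2) ^ 4)⁻¹ *
      (2 / π - (1 / (3 * p ^ 2) * Real.cos (p * π / 2) + 1 - 1 / (3 * p ^ 2))) * x ^ 4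
      < sin x / x := by
  have hpi : (π / 2) ^ 2 < 5 / 2 := by nlinarith [pi_lt_d2, pi_pos]
  set F : ℝ → ℝ := fun y => (sin y / y - (cos (p * y) / (3 * p ^ 2) + (1 - 1 / (3 * p ^ 2)))) / y ^ 4
    with hF
  have hd : ∀ y, 0 < y → HasDerivAt F ((cos y - 5 * (sin y / y) + y * sin (p * y) / (3 * p)
      + 4 * (cos (p * y) / (3 * p ^ 2)) + 4 * (1 - 1 / (3 * p ^ 2))) / y ^ 5) y := by
    intro y h
    have a1 := (hasDerivAt_sin y).fun_div (hasDerivAt_id' y) h.ne'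
    have a2 : HasDerivAt (fun y => cos (p * y)) (-sin (p * y) * (p * 1)) y :=
      ((hasDerivAt_id' y).const_mul p).cos
    have a3 := (a1.fun_sub ((a2.div_const (3 * p ^ 2)).add_const (1 - 1 / (3 * p ^ 2)))).fun_div
      (hasDerivAt_pow 4 y) (by positivity)
    refine a3.congr_deriv ?_
    field_simp
    try norm_num
    ring
  have hm : StrictAntiOn F (Set.Icc x (π / 2)) := by
    apply strictAntiOn_of_deriv_neg (convex_Icc _ _)
    · exact fun y h => (hd y (hx.trans_le h.1)).continuousAt.continuousWithinAt
    · intro y h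
      rw [interior_Icc] at h
      have h0 : 0 < y := hx.trans h.1
      rw [(hd y h0).deriv]
      exact div_neg_of_neg_of_pos (key_H p y hp hq h0 (by nlinarith [h.2])) (by positivity)
  have h := hm (Set.left_mem_Icc.2 hy.le) (Set.right_mem_Icc.2 hy.le) hy
  simp only [hF] at h
  rw [lt_div_iff₀ (by positivity), sin_pi_div_two] at h
  have e : (1 / (π / 2) - (cos (p * (π / 2)) / (3 * p ^ 2) + (1 - 1 / (3 * p ^ 2)))) / (π / 2) ^ 4
      = ((π / 2) ^ 4)⁻¹ *
      (2 / π - (1 / (3 * p ^ 2) * Real.cos (p * π / 2) + 1 - 1 / (3 * p ^ 2))) := by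
    rw [div_eq_inv_mul, ← mul_div_assoc p, one_div_div]
    ring
  rw [e] at h
  linarith

lemma poly_deriv (p c x : ℝ) (hp : 0 < p) :
    HasDerivAt (fun t => Real.sin (p * t) / (3 * p ^ 3) + (1 - 1 / (3 * p ^ 2)) * t + c / 5 * t ^ 5)
      (cos (p * x) / (3 * p ^ 2) + (1 - 1 / (3 * p ^ 2)) + c * x ^ 4) x := by
  have a2 : HasDerivAt (fun y => sin (p * y)) (cos (p * x) * (p * 1)) x :=
    ((hasDerivAt_id' x).const_mul p).sin
  have a3 := ((a2.div_const (3 * p ^ 3)).fun_add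
    ((hasDerivAt_id' x).const_mul (1 - 1 / (3 * p ^ 2)))).fun_add
    ((hasDerivAt_pow 5 x).const_mul (c / 5))
  refine a3.congr_deriv ?_
  field_simp
  norm_num
  ring

lemma si_eq (t : ℝ) : ∫ x in (0 : ℝ)..t, Real.sin x / x = ∫ x in (0 : ℝ)..t, sinc x := by
  apply intervalIntegral.integral_congr_ae
  have : ∀ᵐ x : ℝ, x ≠ 0 := by simp [MeasureTheory.ae_iff]
  filter_upwards [this] with x hx _
  rw [sinc_of_ne_zero hx]

lemma si_deriv (x : ℝ) : HasDerivAt (fun t => ∫ x in (0 : ℝ)..t, sinc x) (sinc x) x :=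
  continuous_sinc.integral_hasStrictDerivAt 0 x |>.hasDerivAt

/-- For `p ∈ (0, √15/5]`, with `c₀(p)` and `c₁(p)` as in the paper and
`Si t = ∫₀ᵗ (sin x)/x dx`, for every `t ∈ (0, π/2)`:
`sin(pt)/(3p³) + (1 − 1/(3p²))t + (c₀(p)/5)t⁵ < Si t
 < sin(pt)/(3p³) + (1 − 1/(3p²))t + (c₁(p)/5)t⁵`. -/
theorem stmt_14 (p : ℝ) (hp : p ∈ Set.Ioc (0 : ℝ) (Real.sqrt 15 / 5))
    (c₀ c₁ : ℝ)
    (hc₀ : c₀ = ((π / 2) ^ 4)⁻¹ *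
      (2 / π - (1 / (3 * p ^ 2) * Real.cos (p * π / 2) + 1 - 1 / (3 * p ^ 2))))
    (hc₁ : c₁ = (3 - 5 * p ^ 2) / 360)
    (t : ℝ) (ht : t ∈ Set.Ioo (0 : ℝ) (π / 2)) :
    Real.sin (p * t) / (3 * p ^ 3) + (1 - 1 / (3 * p ^ 2)) * t + c₀ / 5 * t ^ 5 <
        ∫ x in (0 : ℝ)..t, Real.sin x / x ∧
      (∫ x in (0 : ℝ)..t, Real.sin x / x) <
        Real.sin (p * t) / (3 * p ^ 3) + (1 - 1 / (3 * p ^ 2)) * t + c₁ / 5 * t ^ 5 := by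
  obtain ⟨hp0, hp1⟩ := hp
  obtain ⟨ht0, ht1⟩ := ht
  have hq : p ^ 2 ≤ 3 / 5 := by
    have h := pow_le_pow_left₀ hp0.le hp1 2
    rw [div_pow, Real.sq_sqrt (by norm_num)] at h
    linarith
  have hpi : (π / 2) ^ 2 < 5 / 2 := by nlinarith [pi_lt_d2, pi_pos]
  rw [si_eq]
  constructor
  · have h := aux_pos_s14 _ _ t ht0 (fun x => (si_deriv x).fun_sub (poly_deriv p c₀ x hp0)) (by simp) ?_
    · exact sub_pos.1 h
    · intro x hx hxt
      rw [sinc_of_ne_zero hx.ne', hc₀]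
      exact sub_pos.2 (key_lower p x hp0 hq hx (hxt.trans ht1))
  · have h := aux_pos_s14 _ _ t ht0 (fun x => (poly_deriv p c₁ x hp0).fun_sub (si_deriv x)) (by simp) ?_
    · exact sub_pos.1 h
    · intro x hx hxt
      rw [sinc_of_ne_zero hx.ne', hc₁]
      exact sub_pos.2 (key_upper p x hp0 hq hx (by nlinarith))
end

section
/- Let a, b > 0 with a ≠ b, let G = √(ab) be the geometric mean, A = (a+b)/2 the arithmetic mean, A_p = ((a^p + b^p)/2)^{1/p} the power mean of order p ≠ 0, and L = (a − b)/(ln a − ln b) the logarithmic mean. Then with p₁ = √15/5, the double inequality (5/9)·A_{p₁}^{p₁}·G^{1 − p₁} + (4/9)·G < L < (1/3)·A + (2/3)·G holds, and the constants p₁ = √15/5 and 1 are best possible (i.e., p₁ cannot be increased and the parameter 1 in the upper bound, coming from (1/(3q²))·A_q^q·G^{1−q} + (1 − 1/(3q²))·G with q = 1, cannot be decreased). -/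
open Real

lemma aux_sinh (x : ℝ) (hx : x ≠ 0) :
    HasSum (fun n : ℕ => x ^ (2 * n) / ((2 * n + 1).factorial : ℝ)) (sinh x / x) := by
  have h := (Real.hasSum_sinh x).div_const x
  refine h.congr_fun ?_ |> fun h => h
  intro n
  rw [pow_succ]
  field_simp

lemma aux_cosh_s19 (p x : ℝ) (K : ℝ) :
    HasSum (fun n : ℕ => K * ((p * x) ^ (2 * n) / ((2 * n).factorial : ℝ)) +
      (if n = 0 then (1 - K) else 0)) (K * cosh (p * x) + (1 - K)) :=
  ((Real.hasSum_cosh (p * x)).mul_left K).add (hasSum_ite_eq 0 (1 - K))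

lemma aux_key (n : ℕ) : (2 * (n : ℝ) + 5) * (3 / 5) ^ (n + 1) ≤ 3 := by
  induction n with
  | zero => norm_num
  | succ k ih =>
    have hp : (0 : ℝ) < (3 / 5) ^ (k + 1) := by positivity
    have hk : (0 : ℝ) ≤ k := k.cast_nonneg
    rw [pow_succ]
    push_cast
    nlinarith [mul_nonneg hk hp.le]

lemma aux_term (c : ℝ) (m : ℕ) (y : ℝ) (hy : 0 ≤ y) (h : c * (2 * m + 1) ≤ 1) :
    c * (y / ((2 * m).factorial : ℝ)) ≤ y / ((2 * m + 1).factorial : ℝ) := by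
  have hf : (0 : ℝ) < ((2 * m).factorial : ℝ) := by positivity
  rw [Nat.factorial_succ]
  push_cast
  rw [← mul_div_assoc, div_le_div_iff₀ hf (by positivity)]
  nlinarith [mul_le_mul_of_nonneg_left h (mul_nonneg hy hf.le)]

lemma aux_lower (p x : ℝ) (hp : p ^ 2 = 3 / 5) (hx : x ≠ 0) :
    5 / 9 * cosh (p * x) + 4 / 9 < sinh x / x := by
  have h1 := aux_cosh_s19 p x (5 / 9)
  have h2 := aux_sinh x hx
  have hx2 : 0 < x ^ 2 := by positivity
  have := hasSum_lt (i := 3) ?_ ?_ h1 h2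
  · linarith
  · intro n
    match n with
    | 0 => norm_num
    | 1 =>
      simp [Nat.factorial, mul_pow, hp]
      linarith
    | k + 2 =>
      have e : 5 / 9 * ((p * x) ^ (2 * (k + 2)) / ((2 * (k + 2)).factorial : ℝ)) =
        (1 / 3 * (3 / 5) ^ (k + 1)) * (x ^ (2 * (k + 2)) / ((2 * (k + 2)).factorial : ℝ)) := by
        rw [mul_pow, pow_mul p, hp, pow_succ]
        ring
      simp only [e]
      have := aux_term (1 / 3 * (3 / 5) ^ (k + 1)) (k + 2) (x ^ (2 * (k + 2)))
        (by rw [pow_mul]; positivity) (by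
          have := aux_key k
          push_cast
          linarith)
      simpa using this
  · have e : p ^ 6 = 27 / 125 := by
      rw [show p ^ 6 = (p ^ 2) ^ 3 by ring, hp]; norm_num
    have hx6 : 0 < x ^ 6 := by positivity
    simp [Nat.factorial, mul_pow, e]
    linarith

lemma aux_upper (x : ℝ) (hx : x ≠ 0) :
    sinh x / x < 1 / 3 * cosh x + 2 / 3 := by
  have h1 := aux_cosh_s19 1 x (1 / 3)
  have h2 := aux_sinh x hx
  have := hasSum_lt (i := 2) ?_ ?_ h2 h1
  · rw [one_mul] at this; linarith
  · intro n
    match n with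
    | 0 => norm_num
    | k + 1 =>
      have hf : (0 : ℝ) < ((2 * (k + 1)).factorial : ℝ) := by positivity
      have hy : 0 ≤ x ^ (2 * (k + 1)) := by rw [pow_mul]; positivity
      have hk : (0 : ℝ) ≤ k := k.cast_nonneg
      simp only [one_mul, Nat.factorial_succ (2 * (k + 1)), Nat.succ_ne_zero, if_false, add_zero]
      push_cast
      rw [← mul_div_assoc, div_le_div_iff₀ (by positivity) hf]
      nlinarith [mul_nonneg (mul_nonneg hy hf.le) hk]
  · have hx4 : 0 < x ^ 4 := by positivity
    simp [Nat.factorial]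
    linarith

lemma aux_cosh_lb (y : ℝ) : 1 + y ^ 2 / 2 + y ^ 4 / 24 ≤ cosh y := by
  have h := sum_le_hasSum (Finset.range 3) (fun n _ => by
    rw [pow_mul]; positivity) (Real.hasSum_cosh y)
  simpa [Finset.sum_range_succ, Nat.factorial] using h

lemma aux_sinh_ub (x : ℝ) (hx : 0 < x) (hx1 : x ≤ 1) :
    sinh x / x ≤ 1 + x ^ 2 / 6 + x ^ 4 / 120 + x ^ 6 * (sinh 1 / 1) := by
  have h1 := aux_sinh x hx.ne'
  have h2 := (((hasSum_ite_eq 0 (1 : ℝ)).add (hasSum_ite_eq 1 (x ^ 2 / 6))).add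
    (hasSum_ite_eq 2 (x ^ 4 / 120))).add ((aux_sinh 1 one_ne_zero).mul_left (x ^ 6))
  refine hasSum_le ?_ h1 h2
  intro n
  have hx6 : 0 < x ^ 6 := by positivity
  match n with
  | 0 => simp; positivity
  | 1 => simp [Nat.factorial]; positivity
  | 2 => simp [Nat.factorial]; positivity
  | k + 3 =>
    have : x ^ (2 * (k + 3)) ≤ x ^ 6 := pow_le_pow_of_le_one hx.le hx1 (by omega)
    have h3 : x ^ (2 * (k + 3)) / ((2 * (k + 3) + 1).factorial : ℝ) ≤
      x ^ 6 / ((2 * (k + 3) + 1).factorial : ℝ) := by gcongr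
    simpa [div_eq_mul_inv] using h3

lemma aux_sub (g x p : ℝ) (hg : 0 < g) :
    sqrt (g * exp x * (g * exp (-x))) = g ∧
    ((g * exp x) ^ p + (g * exp (-x)) ^ p) / 2 * g ^ (1 - p) = g * cosh (p * x) ∧
    (g * exp x - g * exp (-x)) / (log (g * exp x) - log (g * exp (-x))) = g * (sinh x / x) := by
  refine ⟨?_, ?_, ?_⟩
  · rw [show g * exp x * (g * exp (-x)) = g ^ 2 * (exp x * exp (-x)) by ring, ← exp_add]
    simp [sqrt_sq hg.le]
  · rw [mul_rpow hg.le (exp_pos _).le, mul_rpow hg.le (exp_pos _).le, ← exp_mul, ← exp_mul,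
      cosh_eq]
    have : g ^ p * g ^ (1 - p) = g := by
      rw [← rpow_add hg]; simp
    rw [show x * p = p * x by ring, show -x * p = -(p * x) by ring]
    linear_combination (exp (p * x) + exp (-(p * x))) / 2 * this
  · rw [log_mul hg.ne' (exp_pos _).ne', log_mul hg.ne' (exp_pos _).ne', log_exp, log_exp, sinh_eq]
    rw [show log g + x - (log g + -x) = 2 * x by ring]
    rw [div_div, ← mul_div_assoc]
    ring

lemma aux_exp2 (y : ℝ) (hy : 0 ≤ y) : 1 + y + y ^ 2 / 2 ≤ exp y := quadratic_le_exp_of_nonneg hy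



/-- For `a, b > 0`, `a ≠ b`, with `G = √(ab)`, `A = (a+b)/2`,
`A_p^p = (a^p + b^p)/2` and `L = (a − b)/(ln a − ln b)`, and `p₁ = √15/5`:
`(5/9)·A_{p₁}^{p₁}·G^{1−p₁} + (4/9)·G < L < (1/3)·A + (2/3)·G`,
where `p₁ = √15/5` and `1` are the best possible constants in the family of
bounds `(1/(3p²))·A_p^p·G^{1−p} + (1 − 1/(3p²))·G`. -/
theorem stmt_19 :
    (∀ a b : ℝ, 0 < a → 0 < b → a ≠ b →
      5 / 9 * ((a ^ (Real.sqrt 15 / 5) + b ^ (Real.sqrt 15 / 5)) / 2) *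
            Real.sqrt (a * b) ^ (1 - Real.sqrt 15 / 5) +
          4 / 9 * Real.sqrt (a * b) <
        (a - b) / (Real.log a - Real.log b) ∧
      (a - b) / (Real.log a - Real.log b) <
        1 / 3 * ((a + b) / 2) + 2 / 3 * Real.sqrt (a * b)) ∧
    (∀ p : ℝ, Real.sqrt 15 / 5 < p →
      ¬ ∀ a b : ℝ, 0 < a → 0 < b → a ≠ b →
        1 / (3 * p ^ 2) * ((a ^ p + b ^ p) / 2) * Real.sqrt (a * b) ^ (1 - p) +
            (1 - 1 / (3 * p ^ 2)) * Real.sqrt (a * b) <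
          (a - b) / (Real.log a - Real.log b)) ∧
    (∀ q : ℝ, 0 < q → q < 1 →
      ¬ ∀ a b : ℝ, 0 < a → 0 < b → a ≠ b →
        (a - b) / (Real.log a - Real.log b) <
          1 / (3 * q ^ 2) * ((a ^ q + b ^ q) / 2) * Real.sqrt (a * b) ^ (1 - q) +
            (1 - 1 / (3 * q ^ 2)) * Real.sqrt (a * b)) := by
  refine ⟨?_, ?_, ?_⟩
  · intro a b ha hb hab
    obtain ⟨g, x, hg, hx, rfl, rfl⟩ : ∃ g x : ℝ, 0 < g ∧ x ≠ 0 ∧ g * exp x = a ∧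
        g * exp (-x) = b := by
      refine ⟨exp ((log a + log b) / 2), (log a - log b) / 2, exp_pos _, ?_, ?_, ?_⟩
      · intro h
        exact hab (log_injOn_pos ha hb (by linarith))
      · rw [← exp_add, ← exp_log ha]; simp only [log_exp]; congr 1; ring
      · rw [← exp_add]
        conv_rhs => rw [← exp_log hb]
        congr 1; ring
    obtain ⟨h1, h2, h3⟩ := aux_sub g x (sqrt 15 / 5) hg
    obtain ⟨-, h4, -⟩ := aux_sub g x 1 hg
    simp only [rpow_one, sub_self, rpow_zero, mul_one, one_mul] at h4
    rw [h1, h3, mul_assoc, h2, h4]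
    have hl := aux_lower (sqrt 15 / 5) x
      (by rw [div_pow, sq_sqrt (by norm_num)]; norm_num) hx
    have hu := aux_upper x hx
    constructor
    · nlinarith [mul_lt_mul_of_pos_left hl hg]
    · nlinarith [mul_lt_mul_of_pos_left hu hg]
  · intro p hp H
    have hs : 0 < sqrt 15 / 5 := by positivity
    have hp0 : 0 < p := hs.trans hp
    have hp2 : 3 / 5 < p ^ 2 := by
      have : (sqrt 15 / 5) ^ 2 = 3 / 5 := by rw [div_pow, sq_sqrt (by norm_num)]; norm_num
      rw [← this]
      gcongr
    have hC : 0 < sinh 1 := sinh_pos_iff.2 one_pos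
    set C := sinh 1 with hCd
    have key : ∀ x : ℝ, 0 < x → x ≤ 1 → p ^ 2 / 72 - 1 / 120 < x ^ 2 * C := by
      intro x hx hx1
      have hne : exp x ≠ exp (-x) := by
        intro h; have := exp_injective h; linarith
      obtain ⟨h1, h2, h3⟩ := aux_sub 1 x p one_pos
      have := H (1 * exp x) (1 * exp (-x)) (by positivity) (by positivity) (by simpa using hne)
      rw [h1, h3, mul_assoc, h2] at this
      have hu := aux_sinh_ub x hx hx1
      have hl := aux_cosh_lb (p * x)
      have hK : 0 < 1 / (3 * p ^ 2) := by positivity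
      have h5 := mul_le_mul_of_nonneg_left hl hK.le
      have h6 : 1 / (3 * p ^ 2) * (1 + (p * x) ^ 2 / 2 + (p * x) ^ 4 / 24) =
          1 / (3 * p ^ 2) + x ^ 2 / 6 + p ^ 2 * x ^ 4 / 72 := by
        field_simp
        ring
      have h7 : x ^ 4 * (p ^ 2 / 72 - 1 / 120) < x ^ 4 * (x ^ 2 * C) := by
        rw [← hCd] at hu
        linarith
      exact lt_of_mul_lt_mul_left h7 (by positivity)
    set d := p ^ 2 / 72 - 1 / 120 with hd
    have hd0 : 0 < d := by rw [hd]; linarith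
    have hm : 0 < min 1 (d / C) := lt_min one_pos (by positivity)
    have h8 := key _ hm (min_le_left _ _)
    have h9 : min 1 (d / C) ^ 2 ≤ d / C := by
      nlinarith [min_le_left 1 (d / C), min_le_right 1 (d / C)]
    have h10 := mul_le_mul_of_nonneg_right h9 hC.le
    rw [div_mul_cancel₀ _ hC.ne'] at h10
    linarith
  · intro q hq hq1 H
    have hK : 0 < 1 / (3 * q ^ 2) := by positivity
    set K := 1 / (3 * q ^ 2) with hKd
    set d := 1 - q with hd
    have hd0 : 0 < d := by rw [hd]; linarith
    set x := 4 * (K + 1) / d ^ 2 with hxd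
    have hx : 0 < x := by positivity
    have hne : exp x ≠ exp (-x) := by
      intro h; have := exp_injective h; linarith
    obtain ⟨h1, h2, h3⟩ := aux_sub 1 x q one_pos
    have h := H (1 * exp x) (1 * exp (-x)) (by positivity) (by positivity) (by simpa using hne)
    rw [h1, h3, mul_assoc, h2, one_mul, one_mul, mul_one, div_lt_iff₀ hx] at h
    have hE : 1 ≤ exp (q * x) := one_le_exp (by positivity)
    have hc : cosh (q * x) ≤ exp (q * x) := by
      rw [cosh_eq]
      have : exp (-(q * x)) ≤ exp (q * x) := exp_le_exp.2 (by nlinarith [mul_pos hq hx])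
      linarith
    have hs : (exp x - 1) / 2 ≤ sinh x := by
      rw [sinh_eq]
      have : exp (-x) ≤ 1 := exp_le_one_iff.2 (by linarith)
      linarith
    have hb : K * cosh (q * x) + (1 - K) ≤ (K + 1) * exp (q * x) := by
      nlinarith [mul_le_mul_of_nonneg_left hc hK.le]
    have hb2 := mul_le_mul_of_nonneg_right hb hx.le
    have he : exp x = exp (d * x) * exp (q * x) := by
      rw [← exp_add]; congr 1; rw [hd]; ring
    have hq2 := aux_exp2 (d * x) (by positivity)
    have hdx : d ^ 2 * x = 4 * (K + 1) := by rw [hxd]; field_simp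
    have hq3 : 1 + 2 * x * (K + 1) < exp (d * x) := by
      have : (d * x) ^ 2 / 2 = 2 * x * (K + 1) := by
        linear_combination x / 2 * hdx
      have := mul_pos hd0 hx
      linarith
    have := mul_lt_mul_of_pos_right hq3 (exp_pos (q * x))
    rw [← he] at this
    linarith
end
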